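/- arXiv:1301.1401 — 3 statements merged into one kernel-verified Lean document; each statement's English description precedes it below -/
import Mathlib

section
/- Let p be a prime with p ≠ 3 and m, n ∈ ℕ. Then K_1(C_{p^m} ⊕ C_3^n) = Σ_{k=1}^m 1/p^{k−1} + n = (p^m − 1)/(p^m − p^{m−1}) + n. -/
open Finset

/-- `S(I)` is minimal zero-sum: nonempty, zero-sum, and no proper nonempty
subfamily is zero-sum. -/
def IsMinZeroSum {G : Type*} [AddCommGroup G] {ℓ : ℕ} (g : Fin ℓ → G)
    (I : Finset (Fin ℓ)) : Prop :=
  I.Nonempty ∧ ∑ i ∈ I, g i = 0 ∧ ∀ J ⊂ I, J.Nonempty → ∑ i ∈ J, g i ≠ 0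

/-- `P` is an irreducible factorization of the indexed multiset `g`: a partition
of the index set all of whose parts are minimal zero-sum. -/
def IsFactorization {G : Type*} [AddCommGroup G] {ℓ : ℕ} (g : Fin ℓ → G)
    (P : Finpartition (Finset.univ : Finset (Fin ℓ))) : Prop :=
  ∀ I ∈ P.parts, IsMinZeroSum g I

/-- `g` is a unique factorization indexed multiset (UFIM) over `G∖{0}`:
all elements are nonzero and there is exactly one irreducible factorization. -/
def IsUFIM {G : Type*} [AddCommGroup G] {ℓ : ℕ} (g : Fin ℓ → G) : Prop :=
  (∀ i, g i ≠ 0) ∧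
  ∃! P : Finpartition (Finset.univ : Finset (Fin ℓ)), IsFactorization g P

/-- The cross number `k(S) = ∑ 1/ord(g_i)`. -/
noncomputable def crossNum {G : Type*} [AddCommGroup G] {ℓ : ℕ} (g : Fin ℓ → G) : ℝ :=
  ∑ i, (1 : ℝ) / (addOrderOf (g i) : ℝ)

/-- `K₁(G)`: the maximal cross number of a UFIM over `G∖{0}`. -/
noncomputable def K1 (G : Type*) [AddCommGroup G] : ℝ :=
  sSup {x : ℝ | ∃ (ℓ : ℕ) (g : Fin ℓ → G), IsUFIM g ∧ crossNum g = x}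

/-- `N₁(G)`: the maximal length of a UFIM over `G∖{0}`. -/
noncomputable def N1 (G : Type*) [AddCommGroup G] : ℕ :=
  sSup {n : ℕ | ∃ g : Fin n → G, IsUFIM g}

/-- `K(G)`: the maximal cross number of a minimal zero-sum indexed multiset over `G∖{0}`. -/
noncomputable def Kcross (G : Type*) [AddCommGroup G] : ℝ :=
  sSup {x : ℝ | ∃ (ℓ : ℕ) (g : Fin ℓ → G), (∀ i, g i ≠ 0) ∧
    IsMinZeroSum g Finset.univ ∧ crossNum g = x}

/-- `g` is zero-sum free: no nonempty subfamily is zero-sum. -/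
def IsZeroSumFree {G : Type*} [AddCommGroup G] {ℓ : ℕ} (g : Fin ℓ → G) : Prop :=
  ∀ I : Finset (Fin ℓ), I.Nonempty → ∑ i ∈ I, g i ≠ 0

/-- The little cross number `k(G)`: the maximal cross number of a zero-sum free
indexed multiset over `G∖{0}`. -/
noncomputable def littleCross (G : Type*) [AddCommGroup G] : ℝ :=
  sSup {x : ℝ | ∃ (ℓ : ℕ) (g : Fin ℓ → G), (∀ i, g i ≠ 0) ∧
    IsZeroSumFree g ∧ crossNum g = x}

/-!
A zero-sum family of nonzero elements is a UFIM iff its zero-sum subfamilies are closed under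
intersection. In this form the property survives merging terms and, when the kernel of a
homomorphism already contains `N₁` of the nonzero terms, applying that homomorphism.

Upper bound. Let `p`, `q` be distinct primes and suppose `N₁` of the `q`-torsion is at most `q n`.
As long as more than `p` terms have the same order `p N` with `N > 1`, one can merge some of them
without losing cross number, so at most `p` terms of each such order may be assumed; at most `p`
terms have order `p`, the `p`-torsion having at most `p` elements. If exactly `p` terms have order
`p`, multiplication by `p` preserves the UFIM property and one inducts on the exponent. If at least
`q n` terms have order `q`, multiplication by `q` preserves it and leads to a family over a
`p`-group. In the remaining case counting by orders suffices.

For `q = 3`, the bound `N₁(C_3^n) ≤ 3 n` comes from Chevalley–Warning: an odd prime `p` divides the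
signed number of zero-sum subfamilies of any family of more than `(p - 1) n` elements of `C_p^n`.
For a UFIM this number is a product over the blocks of its factorization, and deleting one element
from each block of odd length makes it a power of two.

Lower bound. The families `x - q x, x, …, x` of length `q` can be stacked along a chain of
subgroups.
-/

section Factorial

variable {G ι κ : Type*} [AddCommGroup G] [Fintype ι] [DecidableEq ι] [Fintype κ] [DecidableEq κ]

/-- The zero-sum subfamilies of `g` contain the whole family and are closed under intersection.
For a family of nonzero elements this says that `g` is a UFIM (`isUFIM_iff`). Unlike `IsUFIM`, the
notion tolerates zero terms and arbitrary index types, so that it survives adding up terms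
(`IsFactorial.pushforward`) and suitable homomorphisms (`IsFactorial.map`). -/
structure IsFactorial (g : ι → G) : Prop where
  sum_eq_zero : ∑ i, g i = 0
  sum_inter_eq_zero : ∀ I J : Finset ι, ∑ i ∈ I, g i = 0 → ∑ i ∈ J, g i = 0 →
    ∑ i ∈ I ∩ J, g i = 0

namespace IsFactorial

variable {g : ι → G}

theorem sum_sdiff_eq_zero (hg : IsFactorial g) {I J : Finset ι} (hI : ∑ i ∈ I, g i = 0)
    (hJ : ∑ i ∈ J, g i = 0) : ∑ i ∈ I \ J, g i = 0 := by
  rw [← add_right_inj (∑ i ∈ I ∩ J, g i), sum_inter_add_sum_sdiff, hI,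
    hg.sum_inter_eq_zero I J hI hJ, add_zero]

theorem sum_compl (hg : IsFactorial g) (I : Finset ι) : ∑ i ∈ Iᶜ, g i = -∑ i ∈ I, g i :=
  eq_neg_of_add_eq_zero_right ((sum_add_sum_compl I g).trans hg.sum_eq_zero)

theorem pushforward (hg : IsFactorial g) (f : ι → κ) :
    IsFactorial fun k => ∑ i with f i = k, g i where
  sum_eq_zero := by simpa only [sum_fiberwise] using hg.sum_eq_zero
  sum_inter_eq_zero I J hI hJ := by
    rw [sum_fiberwise_eq_sum_filter] at hI hJ ⊢
    simpa only [mem_inter, filter_and] using hg.sum_inter_eq_zero _ _ hI hJ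

theorem comp_embedding (hg : IsFactorial g) (f : κ ↪ ι) (h0 : ∑ k, g (f k) = 0) :
    IsFactorial fun k => g (f k) where
  sum_eq_zero := h0
  sum_inter_eq_zero I J hI hJ := by
    rw [← sum_map] at hI hJ ⊢
    simpa only [map_inter] using hg.sum_inter_eq_zero _ _ hI hJ

theorem of_map {G' : Type*} [AddCommGroup G'] {φ : G →+ G'} (hφ : Function.Injective φ)
    (hg : IsFactorial fun i => φ (g i)) : IsFactorial g := by
  have sum_iff (I : Finset ι) : ∑ i ∈ I, φ (g i) = 0 ↔ ∑ i ∈ I, g i = 0 := by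
    rw [← map_sum, map_eq_zero_iff φ hφ]
  exact ⟨(sum_iff _).1 hg.sum_eq_zero, fun I J hI hJ =>
    (sum_iff _).1 (hg.sum_inter_eq_zero I J ((sum_iff I).2 hI) ((sum_iff J).2 hJ))⟩

end IsFactorial

end Factorial

section MinZeroSum

variable {G : Type*} [AddCommGroup G] {ℓ : ℕ} {g : Fin ℓ → G}

theorem exists_isMinZeroSum_subset {U : Finset (Fin ℓ)} (hU : U.Nonempty)
    (hU0 : ∑ i ∈ U, g i = 0) : ∃ S ⊆ U, IsMinZeroSum g S := by
  induction U using Finset.strongInduction with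
  | H U ih =>
    by_cases hmin : ∀ J ⊂ U, J.Nonempty → ∑ i ∈ J, g i ≠ 0
    · exact ⟨U, Subset.rfl, hU, hU0, hmin⟩
    · push Not at hmin
      obtain ⟨J, hJU, hJ, hJ0⟩ := hmin
      obtain ⟨S, hSJ, hS⟩ := ih J hJU hJ hJ0
      exact ⟨S, hSJ.trans hJU.subset, hS⟩

theorem zeroSum_induction {motive : Finset (Fin ℓ) → Prop} (empty : motive ∅)
    (union : ∀ U S, Disjoint U S → ∑ i ∈ U, g i = 0 → IsMinZeroSum g S → motive U →
      motive (U ∪ S))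
    (U : Finset (Fin ℓ)) (hU : ∑ i ∈ U, g i = 0) : motive U := by
  induction U using Finset.strongInduction with
  | H U ih =>
    rcases U.eq_empty_or_nonempty with rfl | hne
    · exact empty
    · obtain ⟨S, hSU, hS⟩ := exists_isMinZeroSum_subset hne hU
      have hUS : ∑ i ∈ U \ S, g i = 0 := by rw [sum_sdiff_eq_sub hSU, hU, hS.2.1, sub_zero]
      rw [← sdiff_union_of_subset hSU]
      exact union _ S sdiff_disjoint hUS hS (ih _ (sdiff_ssubset hSU hS.1) hUS)

theorem card_ne_one_of_sum_eq_zero {ι : Type*} {g : ι → G} (hne : ∀ i, g i ≠ 0) {U : Finset ι}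
    (hU : ∑ i ∈ U, g i = 0) : #U ≠ 1 := by
  intro h
  obtain ⟨i, rfl⟩ := card_eq_one.1 h
  exact hne i (by simpa only [sum_singleton] using hU)

theorem IsMinZeroSum.two_le_card {S : Finset (Fin ℓ)} (hS : IsMinZeroSum g S)
    (hne : ∀ i, g i ≠ 0) : 2 ≤ #S := by
  have := card_ne_one_of_sum_eq_zero hne hS.2.1
  have := hS.1.card_pos
  omega

theorem IsMinZeroSum.eq_of_subset {S T : Finset (Fin ℓ)} (hT : IsMinZeroSum g T)
    (hST : S ⊆ T) (hS : S.Nonempty) (hS0 : ∑ i ∈ S, g i = 0) : S = T :=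
  hST.eq_or_ssubset.resolve_right fun h => hT.2.2 S h hS hS0

theorem exists_finpartition_isMinZeroSum {W : Finset (Fin ℓ)} (P : Finpartition W)
    (hP : ∀ S ∈ P.parts, IsMinZeroSum g S) {U : Finset (Fin ℓ)} (hWU : Disjoint W U)
    (hU : ∑ i ∈ U, g i = 0) :
    ∃ Q : Finpartition (W ∪ U), P.parts ⊆ Q.parts ∧ ∀ S ∈ Q.parts, IsMinZeroSum g S := by
  revert hWU
  refine zeroSum_induction (motive := fun U => Disjoint W U → ∃ Q : Finpartition (W ∪ U),
    P.parts ⊆ Q.parts ∧ ∀ S ∈ Q.parts, IsMinZeroSum g S) ?_ ?_ U hU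
  · exact fun _ => ⟨P.copy (union_empty W).symm, Subset.rfl, hP⟩
  · rintro U S hUS - hS ih hdisj
    rw [disjoint_union_right] at hdisj
    obtain ⟨Q, hPQ, hQ⟩ := ih hdisj.1
    refine ⟨Q.extend hS.1.ne_empty (disjoint_union_left.2 ⟨hdisj.2, hUS⟩) (union_assoc W U S),
      hPQ.trans (subset_insert S _), forall_mem_insert _ _ _ |>.2 ⟨hS, hQ⟩⟩

theorem IsUFIM.exists_finpartition (hg : IsUFIM g) :
    ∃ P : Finpartition (univ : Finset (Fin ℓ)), IsFactorization g P ∧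
      ∀ I : Finset (Fin ℓ), ∑ i ∈ I, g i = 0 → ∃ A ⊆ P.parts, A.biUnion id = I := by
  obtain ⟨P, hP, hunique⟩ := hg.2
  have hsum : ∑ i, g i = 0 := by
    rw [← P.biUnion_parts, sum_biUnion P.disjoint]
    exact sum_eq_zero fun S hS => (hP S hS).2.1
  refine ⟨P, hP, fun I hI => ?_⟩
  obtain ⟨Q, -, hQ⟩ := exists_finpartition_isMinZeroSum (Finpartition.empty _)
    (fun S hS => absurd hS (notMem_empty S)) (disjoint_bot_left : Disjoint ⊥ I) hI
  have hIc : ∑ i ∈ Iᶜ, g i = 0 := by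
    rw [← add_right_inj (∑ i ∈ I, g i), sum_add_sum_compl, hsum, hI, add_zero]
  obtain ⟨R, hQR, hR⟩ := exists_finpartition_isMinZeroSum (Q.copy (empty_union I)) hQ
    disjoint_compl_right hIc
  refine ⟨Q.parts, ?_, Q.biUnion_parts.trans (empty_union I)⟩
  rw [← hunique (R.copy (union_compl I)) hR]
  exact hQR

theorem IsUFIM.isFactorial (hg : IsUFIM g) : IsFactorial g := by
  obtain ⟨P, hP, hunion⟩ := hg.exists_finpartition
  have sum_biUnion_eq_zero {A : Finset (Finset (Fin ℓ))} (hA : A ⊆ P.parts) :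
      ∑ i ∈ A.biUnion id, g i = 0 := by
    rw [sum_biUnion (P.disjoint.subset hA)]
    exact sum_eq_zero fun S hS => (hP S (hA hS)).2.1
  refine ⟨by simpa only [P.biUnion_parts] using sum_biUnion_eq_zero Subset.rfl, fun I J hI hJ => ?_⟩
  obtain ⟨A, hA, rfl⟩ := hunion I hI
  obtain ⟨B, hB, rfl⟩ := hunion J hJ
  have hAB : A.biUnion id ∩ B.biUnion id = (A ∩ B).biUnion id := by
    ext i
    simp only [mem_inter, mem_biUnion, id]
    constructor
    · rintro ⟨⟨S, hSA, hiS⟩, T, hTB, hiT⟩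
      obtain rfl := P.eq_of_mem_parts (hA hSA) (hB hTB) hiS hiT
      exact ⟨S, ⟨hSA, hTB⟩, hiS⟩
    · rintro ⟨S, ⟨hSA, hSB⟩, hiS⟩
      exact ⟨⟨S, hSA, hiS⟩, S, hSB, hiS⟩
  rw [hAB]
  exact sum_biUnion_eq_zero (inter_subset_left.trans hA)

theorem IsFactorial.eq_of_isMinZeroSum (hg : IsFactorial g) {S T : Finset (Fin ℓ)}
    (hS : IsMinZeroSum g S) (hT : IsMinZeroSum g T) (hST : (S ∩ T).Nonempty) : S = T := by
  have h0 := hg.sum_inter_eq_zero S T hS.2.1 hT.2.1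
  rw [← hS.eq_of_subset inter_subset_left hST h0]
  exact hT.eq_of_subset inter_subset_right hST h0

theorem IsFactorial.existsUnique_isFactorization (hg : IsFactorial g) :
    ∃! P : Finpartition (univ : Finset (Fin ℓ)), IsFactorization g P := by
  obtain ⟨P, -, hP⟩ := exists_finpartition_isMinZeroSum (Finpartition.empty _)
    (fun S hS => absurd hS (notMem_empty S)) (disjoint_bot_left : Disjoint ⊥ univ) hg.sum_eq_zero
  have parts_subset {P Q : Finpartition (univ : Finset (Fin ℓ))} (hP : IsFactorization g P)
      (hQ : IsFactorization g Q) : P.parts ⊆ Q.parts := fun S hS => by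
    obtain ⟨i, hi⟩ := (hP S hS).1
    obtain ⟨T, hT, hiT⟩ := Q.exists_mem (mem_univ i)
    rwa [hg.eq_of_isMinZeroSum (hP S hS) (hQ T hT) ⟨i, mem_inter.2 ⟨hi, hiT⟩⟩]
  exact ⟨P.copy (empty_union univ), hP, fun Q hQ =>
    Finpartition.ext ((parts_subset hQ hP).antisymm (parts_subset hP hQ))⟩

theorem isUFIM_iff : IsUFIM g ↔ (∀ i, g i ≠ 0) ∧ IsFactorial g :=
  ⟨fun hg => ⟨hg.1, hg.isFactorial⟩, fun hg => ⟨hg.1, hg.2.existsUnique_isFactorization⟩⟩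

end MinZeroSum

section PrefixSum

variable {G ι : Type*} [AddCommGroup G] [LinearOrder ι] {g : ι → G} {T : Finset ι} {i k : ι}

theorem sum_filter_lt_sub_sum_filter_lt (g : ι → G) (T : Finset ι) (hik : i ≤ k) :
    ∑ j ∈ T with j < k, g j - ∑ j ∈ T with j < i, g j = ∑ j ∈ T with i ≤ j ∧ j < k, g j := by
  rw [← sum_sdiff_eq_sub (monotone_filter_right T fun j _ hj => lt_of_lt_of_le hj hik)]
  congr 1
  ext j
  simp only [mem_sdiff, mem_filter, ← not_lt]
  tauto

theorem exists_ssubset_of_sum_filter_lt_eq (hi : i ∈ T) (hk : k ∈ T) (hik : i ≠ k)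
    (h : ∑ j ∈ T with j < i, g j = ∑ j ∈ T with j < k, g j) :
    ∃ J ⊂ T, J.Nonempty ∧ ∑ j ∈ J, g j = 0 := by
  wlog hlt : i < k generalizing i k
  · exact this hk hi hik.symm h.symm (hik.lt_or_gt.resolve_left hlt)
  refine ⟨{j ∈ T | i ≤ j ∧ j < k}, ?_, ⟨i, mem_filter.2 ⟨hi, le_rfl, hlt⟩⟩, ?_⟩
  · exact filter_ssubset.2 ⟨k, hk, fun hkk => lt_irrefl k hkk.2⟩
  · rw [← sum_filter_lt_sub_sum_filter_lt g T hlt.le, h, sub_self]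

theorem exists_subset_sum_eq_sum_filter_lt_sub (hT : ∑ j ∈ T, g j = 0) (i k : ι) :
    ∃ D ⊆ T, ∑ j ∈ D, g j = ∑ j ∈ T with j < i, g j - ∑ j ∈ T with j < k, g j := by
  rcases le_total k i with hki | hik
  · exact ⟨_, filter_subset _ T, (sum_filter_lt_sub_sum_filter_lt g T hki).symm⟩
  · refine ⟨T \ {j ∈ T | i ≤ j ∧ j < k}, sdiff_subset, ?_⟩
    rw [sum_sdiff_eq_sub (filter_subset _ T), hT, ← sum_filter_lt_sub_sum_filter_lt g T hik,
      zero_sub, neg_sub]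

theorem exists_ssubset_sum_eq_zero_of_card_lt {ι : Type*} {g : ι → G} {T : Finset ι}
    (H : AddSubgroup G) [Finite H] (hH : ∀ i ∈ T, g i ∈ H) (hT : Nat.card H < #T) :
    ∃ J ⊂ T, J.Nonempty ∧ ∑ i ∈ J, g i = 0 := by
  classical
  let : LinearOrder ι := linearOrderOfSTO WellOrderingRel
  have : Fintype (H : Set G) := Fintype.ofFinite H
  have hcard : #(H : Set G).toFinset < #T := by
    rwa [Set.toFinset_card, ← Nat.card_eq_fintype_card]
  obtain ⟨i, hi, k, hk, hik, h⟩ := exists_ne_map_eq_of_card_lt_of_maps_to hcard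
    (f := fun i => ∑ j ∈ T with j < i, g j) fun i _ => Set.mem_toFinset.2 <|
      H.sum_mem fun j hj => hH j (mem_of_mem_filter j hj)
  exact exists_ssubset_of_sum_filter_lt_eq hi hk hik h

end PrefixSum

section DiffCovered

open scoped Pointwise

variable {G ι : Type*} [AddCommGroup G]

/-- Every difference of two elements of `V` is the sum of some subfamily of `g` inside `U`.
Such sets `V` multiply along disjoint unions of zero-sum subfamilies (`DiffCovered.add`), and this
bounds the length of a UFIM. -/
def DiffCovered (g : ι → G) (U : Finset ι) (V : Finset G) : Prop :=
  ∀ v ∈ V, ∀ v' ∈ V, ∃ D ⊆ U, ∑ i ∈ D, g i = v - v'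

theorem DiffCovered.add [DecidableEq G] [DecidableEq ι] {g : ι → G} {U S : Finset ι}
    {V W : Finset G} (hV : DiffCovered g U V) (hW : DiffCovered g S W) (hUS : Disjoint U S) :
    DiffCovered g (U ∪ S) (V + W) := by
  intro x hx y hy
  obtain ⟨v, hv, w, hw, rfl⟩ := mem_add.1 hx
  obtain ⟨v', hv', w', hw', rfl⟩ := mem_add.1 hy
  obtain ⟨D, hDU, hD⟩ := hV v hv v' hv'
  obtain ⟨E, hES, hE⟩ := hW w hw w' hw'
  refine ⟨D ∪ E, union_subset_union hDU hES, ?_⟩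
  rw [sum_union (disjoint_of_subset_left hDU (disjoint_of_subset_right hES hUS)), hD, hE,
    sub_add_sub_comm]

theorem DiffCovered.card_add [DecidableEq G] [Fintype ι] [DecidableEq ι] {g : ι → G}
    (hg : IsFactorial g) {U S : Finset ι} {V W : Finset G} (hV : DiffCovered g U V)
    (hW : DiffCovered g S W) (hUS : Disjoint U S) (hS : ∑ i ∈ S, g i = 0) :
    #(V + W) = #V * #W := by
  rw [card_add_iff]
  rintro ⟨v, w⟩ ⟨hv, hw⟩ ⟨v', w'⟩ ⟨hv', hw'⟩ (h : v + w = v' + w')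
  obtain ⟨D, hDU, hD⟩ := hV v hv v' hv'
  obtain ⟨E, hES, hE⟩ := hW w hw w' hw'
  have hDS : Disjoint D S := disjoint_of_subset_left hDU hUS
  have hDE : ∑ i ∈ D ∪ E, g i = 0 := by
    rw [sum_union (disjoint_of_subset_right hES hDS), hD, hE, sub_add_sub_comm, h, sub_self]
  have hE0 : ∑ i ∈ E, g i = 0 := by
    have := hg.sum_inter_eq_zero _ _ hDE hS
    rwa [union_inter_distrib_right, disjoint_iff_inter_eq_empty.1 hDS,
      empty_union, inter_eq_left.2 hES] at this
  obtain rfl : w = w' := sub_eq_zero.1 (hE ▸ hE0)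
  rw [add_right_cancel h]

theorem IsMinZeroSum.exists_diffCovered {ℓ : ℕ} {g : Fin ℓ → G} {S : Finset (Fin ℓ)}
    (hS : IsMinZeroSum g S) : ∃ V : Finset G, #V = #S ∧ DiffCovered g S V := by
  classical
  refine ⟨S.image fun i => ∑ j ∈ S with j < i, g j, card_image_of_injOn fun i hi k hk h => ?_,
    forall_mem_image.2 fun i _ => forall_mem_image.2 fun k _ =>
      exists_subset_sum_eq_sum_filter_lt_sub hS.2.1 i k⟩
  by_contra hik
  obtain ⟨J, hJS, hJ, hJ0⟩ := exists_ssubset_of_sum_filter_lt_eq hi hk hik h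
  exact hS.2.2 J hJS hJ hJ0

theorem IsFactorial.exists_diffCovered {ℓ : ℕ} {g : Fin ℓ → G} (hg : IsFactorial g)
    (hne : ∀ i, g i ≠ 0) {U : Finset (Fin ℓ)} (hU : ∑ i ∈ U, g i = 0) :
    ∃ V : Finset G, V.Nonempty ∧ #U ≤ #V ∧ DiffCovered g U V := by
  classical
  refine zeroSum_induction (motive := fun U => ∃ V : Finset G, V.Nonempty ∧ #U ≤ #V ∧
    DiffCovered g U V) ⟨{0}, by simp, by simp, by simp [DiffCovered]⟩ ?_ U hU
  rintro U S hUS hU hS ⟨V, hV, hUV, hcov⟩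
  obtain ⟨W, hW, hcovW⟩ := hS.exists_diffCovered
  have hS2 := hS.two_le_card hne
  have hU1 := card_ne_one_of_sum_eq_zero hne hU
  refine ⟨V + W, hV.add (card_pos.1 (by omega)), ?_, hcov.add hcovW hUS⟩
  rw [card_union_of_disjoint hUS, hcov.card_add hg hcovW hUS hS.2.1, hW]
  rcases (show #U = 0 ∨ 2 ≤ #U by omega) with h0 | h2
  · nlinarith [hV.card_pos]
  · nlinarith

end DiffCovered

section Length

variable {G : Type*} [AddCommGroup G]

theorem IsUFIM.length_le_card [Finite G] {ℓ : ℕ} {g : Fin ℓ → G} (hg : IsUFIM g) :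
    ℓ ≤ Nat.card G := by
  have := Fintype.ofFinite G
  obtain ⟨V, -, hV, -⟩ := hg.isFactorial.exists_diffCovered hg.1 hg.isFactorial.sum_eq_zero
  rw [card_univ, Fintype.card_fin] at hV
  exact hV.trans (Nat.card_eq_fintype_card (α := G) ▸ card_le_univ V)

theorem IsUFIM.length_le_N1 [Finite G] {ℓ : ℕ} {g : Fin ℓ → G} (hg : IsUFIM g) : ℓ ≤ N1 G :=
  le_csSup ⟨Nat.card G, by rintro _ ⟨g, hg⟩; exact hg.length_le_card⟩ ⟨g, hg⟩

theorem N1_le {N : ℕ} (h : ∀ (ℓ : ℕ) (g : Fin ℓ → G), IsUFIM g → ℓ ≤ N) : N1 G ≤ N :=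
  csSup_le' (by rintro ℓ ⟨g, hg⟩; exact h ℓ g hg)

theorem N1_le_card [Finite G] : N1 G ≤ Nat.card G := N1_le fun _ _ hg => hg.length_le_card

variable {ι : Type*} [Fintype ι] [DecidableEq ι] {g : ι → G}

theorem IsFactorial.isUFIM_comp_equivFin (hg : IsFactorial g) (hne : ∀ i, g i ≠ 0) :
    IsUFIM fun k => g ((Fintype.equivFin ι).symm k) :=
  isUFIM_iff.2 ⟨fun _ => hne _, hg.comp_embedding (Fintype.equivFin ι).symm.toEmbedding <|
    ((Fintype.equivFin ι).symm.sum_comp g).trans hg.sum_eq_zero⟩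

theorem IsFactorial.card_support_le_N1 [DecidableEq G] (hg : IsFactorial g) (H : AddSubgroup G)
    [Finite H] (hH : ∀ i, g i ∈ H) : #{i | g i ≠ 0} ≤ N1 H := by
  have hsupp : IsFactorial fun i : {i // g i ≠ 0} => g i :=
    hg.comp_embedding (Function.Embedding.subtype _) <|
      (sum_subtype {i | g i ≠ 0} (fun i => mem_filter_univ i) g).symm.trans <|
        (sum_filter_ne_zero univ).trans hg.sum_eq_zero
  have hsuppH : IsFactorial fun i : {i // g i ≠ 0} => (⟨g i, hH i⟩ : H) :=
    hsupp.of_map (φ := H.subtype) H.subtype_injective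
  rw [← Fintype.card_subtype]
  exact (hsuppH.isUFIM_comp_equivFin fun i h => i.2 congr($h)).length_le_N1

end Length

section Constructions

theorem sum_bool_cond_neg {G : Type*} [AddCommGroup G] (x : G) (J : Finset Bool) :
    J = ∅ ∨ J = univ ∨ ∑ b ∈ J, cond b x (-x) = x ∨ ∑ b ∈ J, cond b x (-x) = -x := by
  have hJ : ∀ J : Finset Bool, J = ∅ ∨ J = univ ∨ J = {true} ∨ J = {false} := by decide
  rcases hJ J with rfl | rfl | rfl | rfl <;> simp

variable {G ι κ : Type*} [AddCommGroup G] [Fintype ι] [DecidableEq ι] [Fintype κ] [DecidableEq κ]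

namespace IsFactorial

theorem of_sum_eq_zero_imp {g : ι → G} (hg : ∑ i, g i = 0)
    (h : ∀ I : Finset ι, ∑ i ∈ I, g i = 0 → I = ∅ ∨ I = univ) : IsFactorial g where
  sum_eq_zero := hg
  sum_inter_eq_zero I J hI hJ := by
    rcases h I hI with rfl | rfl
    · rw [empty_inter, sum_empty]
    · rwa [univ_inter]

theorem cond_neg {x : G} (hx : x ≠ 0) : IsFactorial fun b : Bool => cond b x (-x) := by
  refine of_sum_eq_zero_imp (by simp) fun J hJ => ?_
  rcases sum_bool_cond_neg x J with h | h | h | h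
  · exact Or.inl h
  · exact Or.inr h
  · exact absurd (h.symm.trans hJ) hx
  · exact absurd (h.symm.trans hJ) (neg_ne_zero.2 hx)

theorem sumElim {g : ι → G} {h : κ → G} (hg : IsFactorial g) (hh : IsFactorial h)
    (hgh : ∀ I J, ∑ i ∈ I, g i + ∑ j ∈ J, h j = 0 → ∑ j ∈ J, h j = 0) :
    IsFactorial (Sum.elim g h) := by
  have sum_eq (I : Finset (ι ⊕ κ)) :
      ∑ k ∈ I, Sum.elim g h k = ∑ i ∈ I.toLeft, g i + ∑ j ∈ I.toRight, h j := by
    rw [← I.toLeft_disjSum_toRight, sum_disjSum, toLeft_disjSum, toRight_disjSum]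
    simp only [Sum.elim_inl, Sum.elim_inr]
  have split {I : Finset (ι ⊕ κ)} (hI : ∑ k ∈ I, Sum.elim g h k = 0) :
      ∑ i ∈ I.toLeft, g i = 0 ∧ ∑ j ∈ I.toRight, h j = 0 := by
    rw [sum_eq] at hI
    have hR := hgh _ _ hI
    exact ⟨by rwa [hR, add_zero] at hI, hR⟩
  refine ⟨?_, fun I J hI hJ => ?_⟩
  · simp only [Fintype.sum_sum_type, Sum.elim_inl, Sum.elim_inr, hg.sum_eq_zero, hh.sum_eq_zero,
      add_zero]
  · rw [sum_eq, toLeft_inter, toRight_inter,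
      hg.sum_inter_eq_zero _ _ (split hI).1 (split hJ).1,
      hh.sum_inter_eq_zero _ _ (split hI).2 (split hJ).2, add_zero]

variable {g : ι → G}

theorem map {G' : Type*} [AddCommGroup G'] (hg : IsFactorial g) (φ : G →+ G') (A : Finset ι)
    (hA : ∀ i ∈ A, φ (g i) = 0)
    (h : ∀ I : Finset ι, φ (∑ i ∈ I, g i) = 0 → ∑ i ∈ I \ A, g i = 0) :
    IsFactorial fun i => φ (g i) := by
  have map_sum_eq_zero_iff (I : Finset ι) :
      ∑ i ∈ I, φ (g i) = 0 ↔ ∑ i ∈ I \ A, g i = 0 := by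
    refine ⟨fun hI => h I (by rwa [map_sum]), fun hI => ?_⟩
    rw [← sum_inter_add_sum_sdiff I A, ← map_sum _ _ (I \ A), hI, map_zero, add_zero]
    exact Finset.sum_eq_zero fun i hi => hA i (mem_of_mem_inter_right hi)
  refine ⟨by rw [← map_sum, hg.sum_eq_zero, map_zero], fun I J hI hJ => ?_⟩
  rw [map_sum_eq_zero_iff] at hI hJ ⊢
  rw [show (I ∩ J) \ A = I \ A ∩ (J \ A) from inf_sdiff]
  exact hg.sum_inter_eq_zero _ _ hI hJ

end IsFactorial

/-- The subfamily of `g` indexed by `B`, completed to a zero-sum family by one extra term. -/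
def completion (g : ι → G) (B : Finset ι) : Option B → G
  | none => -∑ i ∈ B, g i
  | some i => g i

variable {g : ι → G}

theorem IsFactorial.isFactorial_completion (hg : IsFactorial g) (B : Finset ι) :
    IsFactorial (completion g B) := by
  convert hg.pushforward fun i => if h : i ∈ B then some (⟨i, h⟩ : B) else none using 1
  funext k
  rcases k with _ | i
  · rw [completion, ← hg.sum_compl]
    congr 1
    ext i
    by_cases hi : i ∈ B <;> simp [hi]
  · rw [completion]
    have : ({j | (if h : j ∈ B then some (⟨j, h⟩ : B) else none) = some i} : Finset ι) = {↑i} := by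
      ext j
      by_cases hj : j ∈ B
      · simp [hj, Subtype.ext_iff]
      · have : j ≠ i := fun h => hj (h ▸ i.2)
        simp [this]
    rw [this, sum_singleton]

omit [Fintype ι] [DecidableEq ι] in
theorem exists_subset_sum_completion_eq (g : ι → G) {B : Finset ι} (I : Finset (Option B)) :
    ∃ T ⊆ B, ∑ k ∈ I, completion g B k = ∑ i ∈ T, g i ∨
      ∑ k ∈ I, completion g B k = -∑ i ∈ T, g i := by
  classical
  set T : Finset ι := (eraseNone I).map (Function.Embedding.subtype _)
  have hT : ∑ k ∈ I.erase none, completion g B k = ∑ i ∈ T, g i := by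
    rw [← map_some_eraseNone, sum_map, sum_map]
    rfl
  have hTB : T ⊆ B := fun _ => property_of_mem_map_subtype (eraseNone I)
  by_cases hI : none ∈ I
  · refine ⟨B \ T, sdiff_subset, Or.inr ?_⟩
    rw [← add_sum_erase _ _ hI, hT, sum_sdiff_eq_sub hTB, neg_sub, completion, sub_eq_neg_add]
  · exact ⟨T, hTB, Or.inl (by rw [← hT, erase_eq_of_notMem hI])⟩

namespace IsFactorial

theorem card_le_N1_of_map {G' : Type*} [AddCommGroup G'] (hg : IsFactorial g) (φ : G →+ G')
    {H : AddSubgroup G'} [Finite H] {B : Finset ι} (hH : ∀ i ∈ B, φ (g i) ∈ H)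
    (hne : ∀ i ∈ B, g i ≠ 0) (h : ∀ T ⊆ B, φ (∑ i ∈ T, g i) = 0 → ∑ i ∈ T, g i = 0) :
    #B ≤ N1 H := by
  classical
  have hmap : IsFactorial fun k => φ (completion g B k) := by
    refine (hg.isFactorial_completion B).map φ ∅ (fun _ hi => absurd hi (notMem_empty _))
      fun I hI => ?_
    obtain ⟨T, hTB, hT | hT⟩ := exists_subset_sum_completion_eq g I <;>
      rw [hT] at hI
    · rw [sdiff_empty, hT, h T hTB hI]
    · rw [sdiff_empty, hT, h T hTB (by rwa [map_neg, neg_eq_zero] at hI), neg_zero]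
  have hmem (k) : φ (completion g B k) ∈ H := by
    rcases k with _ | i
    · rw [completion, map_neg, map_sum]
      exact H.neg_mem (H.sum_mem hH)
    · exact hH i i.2
  refine le_trans ?_ (hmap.card_support_le_N1 H hmem)
  rw [← card_attach, ← card_map Function.Embedding.some]
  refine card_le_card fun k hk => ?_
  obtain ⟨i, -, rfl⟩ := mem_map.1 hk
  exact mem_filter_univ _ |>.2 fun hi => hne i i.2 <| by
    simpa only [sum_singleton] using h {↑i} (singleton_subset_iff.2 i.2)
      ((congrArg φ (sum_singleton g i)).trans hi)

section

variable {H : AddSubgroup G} [Finite H] {A : Finset ι}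

theorem sum_eq_zero_of_N1_le (hg : IsFactorial g) (hH : ∀ i ∈ A, g i ∈ H)
    (hne : ∀ i ∈ A, g i ≠ 0) (hA : N1 H ≤ #A) : ∑ i ∈ A, g i = 0 := by
  classical
  by_contra hsum
  have hmem (k) : completion g A k ∈ H := by
    rcases k with _ | i
    · exact H.neg_mem (H.sum_mem hH)
    · exact hH i i.2
  have hne' (k) : completion g A k ≠ 0 := by
    rcases k with _ | i
    · exact neg_ne_zero.2 hsum
    · exact hne i i.2
  have hcard := (hg.isFactorial_completion A).card_support_le_N1 H hmem
  rw [filter_true_of_mem fun k _ => hne' k, card_univ, Fintype.card_option,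
    Fintype.card_coe] at hcard
  omega

theorem exists_subset_sum_eq (hg : IsFactorial g) (hH : ∀ i ∈ A, g i ∈ H)
    (hne : ∀ i ∈ A, g i ≠ 0) (hA : N1 H ≤ #A) {x : G} (hx : x ∈ H) :
    ∃ T ⊆ A, ∑ i ∈ T, g i = x := by
  classical
  by_contra! hT
  have hx0 : x ≠ 0 := (hT ∅ (empty_subset A)).symm
  have hA0 := hg.sum_eq_zero_of_N1_le hH hne hA
  have sum_ne (I : Finset A) : ∑ i ∈ I, g i ≠ x ∧ ∑ i ∈ I, g i ≠ -x := by
    have hI : I.map (Function.Embedding.subtype _) ⊆ A := fun _ =>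
      property_of_mem_map_subtype I
    have hsum := sum_map I (Function.Embedding.subtype (· ∈ A)) g
    refine ⟨fun h => hT _ hI (hsum.trans h), fun h => hT (A \ I.map (.subtype _)) sdiff_subset ?_⟩
    rw [sum_sdiff_eq_sub hI, hsum.trans h, hA0, zero_sub, neg_neg]
  have hfac : IsFactorial (Sum.elim (fun i : A => g i) fun b : Bool => cond b x (-x)) := by
    refine (hg.comp_embedding (Function.Embedding.subtype _)
      ((sum_coe_sort A g).trans hA0)).sumElim (cond_neg hx0) fun I J hIJ => ?_
    rcases sum_bool_cond_neg x J with rfl | rfl | h | h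
    · exact sum_empty
    · exact (cond_neg hx0).sum_eq_zero
    · exact absurd (eq_neg_of_add_eq_zero_left (h ▸ hIJ)) (sum_ne I).2
    · exact absurd (neg_neg x ▸ eq_neg_of_add_eq_zero_left (h ▸ hIJ)) (sum_ne I).1
  have hcard := hfac.card_support_le_N1 H <| by
    rintro (i | _ | _)
    exacts [hH i i.2, H.neg_mem hx, hx]
  have hne' (k) : Sum.elim (fun i : A => g i) (fun b : Bool => cond b x (-x)) k ≠ 0 := by
    rcases k with i | _ | _
    exacts [hne i i.2, neg_ne_zero.2 hx0, hx0]
  rw [filter_true_of_mem fun k _ => hne' k, card_univ, Fintype.card_sum, Fintype.card_coe,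
    Fintype.card_bool] at hcard
  omega

end

theorem map_of_N1_ker_le {G' : Type*} [AddCommGroup G'] (hg : IsFactorial g) (φ : G →+ G')
    [Finite φ.ker] [DecidableEq G] [DecidableEq G'] (h : N1 φ.ker ≤ #{i | g i ≠ 0 ∧ φ (g i) = 0}) :
    IsFactorial fun i => φ (g i) := by
  set A : Finset ι := {i | g i ≠ 0 ∧ φ (g i) = 0}
  have hne (i) (hi : i ∈ A) : g i ≠ 0 := (mem_filter_univ i |>.1 hi).1
  have hker (i) (hi : i ∈ A) : g i ∈ φ.ker := (mem_filter_univ i |>.1 hi).2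
  refine hg.map φ A hker fun I hI => ?_
  have hIA : ∑ i ∈ I \ A, g i ∈ φ.ker := by
    rw [← φ.mem_ker, ← sum_inter_add_sum_sdiff I A] at hI
    exact (φ.ker.add_mem_cancel_left
      (φ.ker.sum_mem fun i hi => hker i (mem_of_mem_inter_right hi))).1 hI
  obtain ⟨T, hTA, hT⟩ := hg.exists_subset_sum_eq hker hne h (φ.ker.neg_mem hIA)
  have hdisj : Disjoint (I \ A) T := disjoint_of_subset_right hTA sdiff_disjoint
  have hunion : ∑ i ∈ I \ A ∪ T, g i = 0 := by rw [sum_union hdisj, hT, add_neg_cancel]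
  have := hg.sum_sdiff_eq_zero hunion (hg.sum_eq_zero_of_N1_le hker hne h)
  rwa [union_sdiff_distrib, Finset.sdiff_sdiff_left', inter_self, sdiff_eq_empty_iff_subset.2 hTA,
    union_empty] at this

end IsFactorial

end Constructions

section Weight

variable {G : Type*} [AddCommGroup G]

open Classical in
/-- The contribution `1 / ord x` of a term `x` to a cross number, except that the zero element
contributes `0` so that zero terms may be discarded. -/
noncomputable def recipOrder (x : G) : ℝ := if x = 0 then 0 else 1 / addOrderOf x

theorem recipOrder_zero : recipOrder (0 : G) = 0 := if_pos rfl

theorem recipOrder_of_ne_zero {x : G} (hx : x ≠ 0) : recipOrder x = 1 / addOrderOf x := if_neg hx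

theorem recipOrder_nonneg (x : G) : 0 ≤ recipOrder x := by
  unfold recipOrder
  split <;> positivity

theorem inv_le_recipOrder {x : G} (hx : x ≠ 0) {N : ℕ} (hN : N ≠ 0) (hNx : N • x = 0) :
    1 / (N : ℝ) ≤ recipOrder x := by
  rw [recipOrder_of_ne_zero hx]
  have hdvd := addOrderOf_dvd_of_nsmul_eq_zero hNx
  have hpos : 0 < addOrderOf x := Nat.pos_of_dvd_of_pos hdvd (Nat.pos_of_ne_zero hN)
  gcongr
  exact Nat.le_of_dvd (Nat.pos_of_ne_zero hN) hdvd

theorem recipOrder_eq_sum_divisors {x : G} {N : ℕ} (hN : N ≠ 0) (hNx : N • x = 0) :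
    recipOrder x = ∑ M ∈ N.divisors.erase 1, if addOrderOf x = M then 1 / (M : ℝ) else 0 := by
  rw [sum_ite_eq]
  by_cases hx : x = 0
  · rw [hx, recipOrder_zero, addOrderOf_zero, if_neg (notMem_erase 1 _)]
  · rw [recipOrder_of_ne_zero hx, if_pos]
    rw [mem_erase, Ne, AddMonoid.addOrderOf_eq_one_iff]
    exact ⟨hx, Nat.mem_divisors.2 ⟨addOrderOf_dvd_of_nsmul_eq_zero hNx, hN⟩⟩

variable {ι : Type*} [Fintype ι]

/-- The cross number of a family in which zero terms and arbitrary index types are allowed. -/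
noncomputable def weight (g : ι → G) : ℝ := ∑ i, recipOrder (g i)

theorem crossNum_eq_weight {ℓ : ℕ} {g : Fin ℓ → G} (hne : ∀ i, g i ≠ 0) : crossNum g = weight g :=
  sum_congr rfl fun i _ => (recipOrder_of_ne_zero (hne i)).symm

/-- The number of terms of `g` of order `M`. -/
noncomputable def orderCount (g : ι → G) (M : ℕ) : ℕ := #{i | addOrderOf (g i) = M}

theorem sum_ite_addOrderOf_eq (g : ι → G) (M : ℕ) (c : ℝ) :
    ∑ i, (if addOrderOf (g i) = M then c else 0) = orderCount g M * c := by
  rw [← sum_filter, sum_const, nsmul_eq_mul, orderCount]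

theorem weight_eq_sum_divisors {g : ι → G} {N : ℕ} (hN : N ≠ 0) (hNg : ∀ i, N • g i = 0) :
    weight g = ∑ M ∈ N.divisors.erase 1, orderCount g M * (1 / (M : ℝ)) := by
  simp only [weight, recipOrder_eq_sum_divisors hN (hNg _), ← sum_ite_addOrderOf_eq]
  exact sum_comm

theorem orderCount_prime [DecidableEq G] (g : ι → G) {p : ℕ} (hp : p.Prime) :
    orderCount g p = #{i | g i ≠ 0 ∧ p • g i = 0} := by
  have := Fact.mk hp
  simp only [orderCount, addOrderOf_eq_prime_iff, and_comm]

variable [DecidableEq ι] {g : ι → G} {p : ℕ}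

theorem IsFactorial.orderCount_le_N1 (hg : IsFactorial g) (hp : p.Prime)
    [Finite (nsmulAddMonoidHom (α := G) p).ker] :
    orderCount g p ≤ N1 (nsmulAddMonoidHom (α := G) p).ker := by
  classical
  rw [orderCount_prime g hp]
  exact hg.card_le_N1_of_map (AddMonoidHom.id G) (fun i hi => (mem_filter.1 hi).2.2)
    (fun i hi => (mem_filter.1 hi).2.1) fun _ _ => id

theorem IsFactorial.nsmul (hg : IsFactorial g) (hp : p.Prime)
    [Finite (nsmulAddMonoidHom (α := G) p).ker]
    (h : N1 (nsmulAddMonoidHom (α := G) p).ker ≤ orderCount g p) :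
    IsFactorial fun i => p • g i := by
  classical
  rw [orderCount_prime g hp] at h
  exact hg.map_of_N1_ker_le (nsmulAddMonoidHom p) h

end Weight

section Merge

variable {G ι : Type*} [AddCommGroup G] [DecidableEq ι]

/-- The family obtained from `g` by adding up the terms indexed by `T`: the sum is placed at `t`
and the other terms of `T` become `0`. -/
def merge (g : ι → G) (T : Finset ι) (t : ι) (i : ι) : G :=
  if i ∈ T then if i = t then ∑ j ∈ T, g j else 0 else g i

variable {g : ι → G} {T : Finset ι} {t : ι}

theorem merge_of_mem_of_ne {i : ι} (hi : i ∈ T) (hit : i ≠ t) : merge g T t i = 0 := by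
  rw [merge, if_pos hi, if_neg hit]

theorem merge_of_notMem {i : ι} (hi : i ∉ T) : merge g T t i = g i := if_neg hi

theorem merge_self (ht : t ∈ T) : merge g T t t = ∑ i ∈ T, g i := by
  rw [merge, if_pos ht, if_pos rfl]

theorem nsmul_merge_eq_zero {N : ℕ} (h : ∀ i, N • g i = 0) (i : ι) : N • merge g T t i = 0 := by
  unfold merge
  split_ifs
  · rw [smul_sum]
    exact sum_eq_zero fun j _ => h j
  · exact smul_zero N
  · exact h i

variable [Fintype ι]

theorem IsFactorial.merge (hg : IsFactorial g) (ht : t ∈ T) : IsFactorial (merge g T t) := by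
  convert hg.pushforward fun i => if i ∈ T then t else i using 1
  funext k
  by_cases hk : k ∈ T
  · by_cases hkt : k = t
    · subst hkt
      rw [merge_self hk]
      congr 1
      ext i
      by_cases hi : i ∈ T
      · simp [hi]
      · simpa [hi] using fun h : i = k => hi (h ▸ hk)
    · rw [merge_of_mem_of_ne hk hkt, filter_false_of_mem, sum_empty]
      intro i _
      split_ifs with hi
      · exact Ne.symm hkt
      · exact fun h => hi (h ▸ hk)
  · rw [merge_of_notMem hk, ← sum_singleton g k]
    congr 1
    ext i
    by_cases hi : i ∈ T
    · simp [hi, ne_of_mem_of_not_mem hi hk, ne_of_mem_of_not_mem ht hk]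
    · simp [hi]

theorem weight_merge_add_sum (ht : t ∈ T) :
    weight (merge g T t) + ∑ i ∈ T, recipOrder (g i) =
      weight g + recipOrder (∑ i ∈ T, g i) := by
  have hT : ∑ i ∈ T, recipOrder (merge g T t i) = recipOrder (∑ i ∈ T, g i) := by
    rw [sum_eq_single_of_mem t ht fun i hi hit => by
      rw [merge_of_mem_of_ne hi hit, recipOrder_zero], merge_self ht]
  have hTc : ∑ i ∈ Tᶜ, recipOrder (merge g T t i) = ∑ i ∈ Tᶜ, recipOrder (g i) :=
    sum_congr rfl fun i hi => by rw [merge_of_notMem (mem_compl.1 hi)]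
  rw [weight, weight, ← sum_add_sum_compl T, ← sum_add_sum_compl T fun i => recipOrder (g i), hT,
    hTc]
  ring

theorem card_support_merge_lt [DecidableEq G] (hne : ∀ i ∈ T, g i ≠ 0) (hT : 1 < #T) :
    #{i | merge g T t i ≠ 0} < #{i | g i ≠ 0} := by
  obtain ⟨s, hs, hst⟩ := exists_mem_ne hT t
  refine card_lt_card <| ssubset_iff_of_subset (fun i hi => ?_) |>.2
    ⟨s, (mem_filter_univ s).2 (hne s hs), fun hs' => ?_⟩
  · rw [mem_filter_univ] at hi ⊢
    by_cases hiT : i ∈ T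
    · exact hne i hiT
    · rwa [merge_of_notMem hiT] at hi
  · exact (mem_filter_univ s).1 hs' (merge_of_mem_of_ne hs hst)

omit [DecidableEq ι] [Fintype ι] in
theorem exists_subset_card_le_map_sum_eq_zero {G' : Type*} [AddCommGroup G'] {φ : G →+ G'}
    {H : AddSubgroup G'} [Finite H] {T : Finset ι} (hH : ∀ i ∈ T, φ (g i) ∈ H)
    (hφ : φ (∑ i ∈ T, g i) = 0) (hT : ∑ i ∈ T, g i ≠ 0) :
    ∃ S ⊆ T, #S ≤ Nat.card H ∧ φ (∑ i ∈ S, g i) = 0 ∧ ∑ i ∈ S, g i ≠ 0 := by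
  classical
  induction T using Finset.strongInduction with
  | H T ih =>
    rcases le_or_gt #T (Nat.card H) with hcard | hcard
    · exact ⟨T, Subset.rfl, hcard, hφ, hT⟩
    suffices ∃ J ⊂ T, φ (∑ i ∈ J, g i) = 0 ∧ ∑ i ∈ J, g i ≠ 0 by
      obtain ⟨J, hJT, hφJ, hJ⟩ := this
      obtain ⟨S, hSJ, hS⟩ := ih J hJT (fun i hi => hH i (hJT.subset hi)) hφJ hJ
      exact ⟨S, hSJ.trans hJT.subset, hS⟩
    obtain ⟨J, hJT, hJ, hJ0⟩ := exists_ssubset_sum_eq_zero_of_card_lt H hH hcard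
    rw [← map_sum] at hJ0
    by_cases hJsum : ∑ i ∈ J, g i = 0
    · refine ⟨T \ J, sdiff_ssubset hJT.subset hJ, ?_⟩
      rw [sum_sdiff_eq_sub hJT.subset, hJsum, sub_zero]
      exact ⟨hφ, hT⟩
    · exact ⟨J, hJT, hJ0, hJsum⟩

variable {p : ℕ}

omit [DecidableEq ι] [Fintype ι] in
theorem nsmul_ne_zero_of_addOrderOf_eq_mul {x : G} {N : ℕ} (hp : p.Prime) (hN : N ≠ 0)
    (hx : addOrderOf x = p * N) : N • x ≠ 0 := fun h => by
  have hle := Nat.le_of_dvd (Nat.pos_of_ne_zero hN) (addOrderOf_dvd_of_nsmul_eq_zero h)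
  rw [hx] at hle
  nlinarith [hp.one_lt, Nat.pos_of_ne_zero hN]

theorem IsFactorial.exists_subset_nsmul_sum_eq_zero (hg : IsFactorial g) (hp : p.Prime)
    [Finite (nsmulAddMonoidHom (α := G) p).ker]
    (hcard : Nat.card (nsmulAddMonoidHom (α := G) p).ker ≤ p) {N : ℕ} (hN : N ≠ 0)
    (hM : p < orderCount g (p * N)) :
    ∃ S : Finset ι, (∀ i ∈ S, addOrderOf (g i) = p * N) ∧ #S ≤ p ∧ N • ∑ i ∈ S, g i = 0 ∧
      ∑ i ∈ S, g i ≠ 0 := by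
  set C : Finset ι := {i | addOrderOf (g i) = p * N}
  have order_eq {i} (hi : i ∈ C) : addOrderOf (g i) = p * N := (mem_filter_univ i).1 hi
  have hne (i) (hi : i ∈ C) : g i ≠ 0 := fun h =>
    nsmul_ne_zero_of_addOrderOf_eq_mul hp hN (order_eq hi) (by rw [h, smul_zero])
  have hker (i) (hi : i ∈ C) : nsmulAddMonoidHom N (g i) ∈ (nsmulAddMonoidHom (α := G) p).ker := by
    change p • N • g i = 0
    rw [← mul_smul, ← order_eq hi, addOrderOf_nsmul_eq_zero]
  obtain ⟨T, hTC, hT0, hT⟩ : ∃ T ⊆ C, nsmulAddMonoidHom N (∑ i ∈ T, g i) = 0 ∧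
      ∑ i ∈ T, g i ≠ 0 := by
    by_contra! h
    exact hM.not_ge ((hg.card_le_N1_of_map _ hker hne h).trans (N1_le_card.trans hcard))
  obtain ⟨S, hST, hS, hS0⟩ :=
    exists_subset_card_le_map_sum_eq_zero (fun i hi => hker i (hTC hi)) hT0 hT
  exact ⟨S, fun i hi => order_eq (hTC (hST hi)), hS.trans hcard, hS0⟩

theorem IsFactorial.exists_weight_le_merge (hg : IsFactorial g) (hp : p.Prime)
    [Finite (nsmulAddMonoidHom (α := G) p).ker]
    (hcard : Nat.card (nsmulAddMonoidHom (α := G) p).ker ≤ p) {N : ℕ} (hN : N ≠ 0)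
    (hM : p < orderCount g (p * N)) :
    ∃ T : Finset ι, ∃ t ∈ T, 1 < #T ∧ (∀ i ∈ T, g i ≠ 0) ∧
      weight g ≤ weight (_root_.merge g T t) := by
  obtain ⟨T, horder, hT, hT0, hTne⟩ := hg.exists_subset_nsmul_sum_eq_zero hp hcard hN hM
  have hnsmul (i) (hi : i ∈ T) : N • g i ≠ 0 :=
    nsmul_ne_zero_of_addOrderOf_eq_mul hp hN (horder i hi)
  have hne (i) (hi : i ∈ T) : g i ≠ 0 := fun h => hnsmul i hi (by rw [h, smul_zero])
  obtain ⟨t, ht⟩ : T.Nonempty := by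
    rw [nonempty_iff_ne_empty]
    rintro rfl
    exact hTne sum_empty
  have hT1 : #T ≠ 1 := fun h => by
    obtain ⟨i, rfl⟩ := card_eq_one.1 h
    exact hnsmul i (mem_singleton_self i) (by rwa [sum_singleton] at hT0)
  refine ⟨T, t, ht, lt_of_le_of_ne (card_pos.2 ⟨t, ht⟩) hT1.symm, hne, ?_⟩
  have hsum : ∑ i ∈ T, recipOrder (g i) ≤ recipOrder (∑ i ∈ T, g i) := calc
    ∑ i ∈ T, recipOrder (g i) = #T * (1 / ((p * N : ℕ) : ℝ)) := by
      rw [sum_congr rfl fun i hi => by rw [recipOrder_of_ne_zero (hne i hi), horder i hi],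
        sum_const, nsmul_eq_mul]
    _ ≤ p * (1 / ((p * N : ℕ) : ℝ)) := by gcongr
    _ = 1 / (N : ℝ) := by
      have := hp.ne_zero
      push_cast
      field_simp
    _ ≤ recipOrder (∑ i ∈ T, g i) := inv_le_recipOrder hTne hN hT0
  linarith [weight_merge_add_sum (g := g) ht]

theorem IsFactorial.exists_orderCount_le (hg : IsFactorial g) (hp : p.Prime)
    [Finite (nsmulAddMonoidHom (α := G) p).ker]
    (hcard : Nat.card (nsmulAddMonoidHom (α := G) p).ker ≤ p) {N : ℕ} (hNg : ∀ i, N • g i = 0) :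
    ∃ g' : ι → G, IsFactorial g' ∧ (∀ i, N • g' i = 0) ∧ weight g ≤ weight g' ∧
      ∀ M ≠ 0, orderCount g' (p * M) ≤ p := by
  classical
  induction hs : #{i | g i ≠ 0} using Nat.strong_induction_on generalizing g with
  | _ s ih =>
    by_cases hM : ∀ M ≠ 0, orderCount g (p * M) ≤ p
    · exact ⟨g, hg, hNg, le_rfl, hM⟩
    · push Not at hM
      obtain ⟨M, hM0, hM⟩ := hM
      obtain ⟨T, t, ht, hT, hne, hweight⟩ := hg.exists_weight_le_merge hp hcard hM0 hM
      obtain ⟨g', hg', hNg', hle, hcount⟩ := ih _ (hs ▸ card_support_merge_lt hne hT)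
        (hg.merge ht) (nsmul_merge_eq_zero hNg) rfl
      exact ⟨g', hg', hNg', hweight.trans hle, hcount⟩

end Merge

section UpperBound

variable {A : Type*} [AddCommGroup A]

theorem sum_divisors_prime_pow_erase_one {p : ℕ} (hp : p.Prime) (m : ℕ) (f : ℕ → A) :
    ∑ M ∈ (p ^ m).divisors.erase 1, f M = ∑ k ∈ range m, f (p ^ (k + 1)) := by
  rw [sum_erase_eq_sub (Nat.one_mem_divisors.2 (pow_ne_zero m hp.ne_zero)),
    Nat.sum_divisors_prime_pow hp, sum_range_succ', pow_zero, add_sub_cancel_right]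

theorem sum_divisors_mul_prime_pow_erase_one {p q : ℕ} (hp : p.Prime) (hq : q.Prime) (hpq : p ≠ q)
    (m : ℕ) (f : ℕ → A) :
    ∑ M ∈ (q * p ^ m).divisors.erase 1, f M =
      ∑ k ∈ range m, f (p ^ (k + 1)) + ∑ k ∈ range (m + 1), f (q * p ^ k) := by
  have hcop : Nat.Coprime q (p ^ m) := ((Nat.coprime_primes hq hp).2 hpq.symm).pow_right m
  have hmul : ∑ M ∈ (q * p ^ m).divisors, f M =
      ∑ x ∈ q.divisors ×ˢ (p ^ m).divisors, f (x.1 * x.2) := by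
    rw [hcop.divisors_mul, sum_map]
    exact sum_attach (q.divisors ×ˢ (p ^ m).divisors) fun x => f (x.1 * x.2)
  rw [sum_erase_eq_sub (Nat.one_mem_divisors.2 (mul_ne_zero hq.ne_zero (pow_ne_zero m hp.ne_zero))),
    hmul, sum_product, hq.sum_divisors, Nat.sum_divisors_prime_pow hp,
    Nat.sum_divisors_prime_pow hp, sum_range_succ' fun k => f (1 * p ^ k)]
  simp only [one_mul, pow_zero]
  abel

variable {G : Type*} [AddCommGroup G]

theorem recipOrder_le_nsmul {q : ℕ} (hq : q.Prime) {x : G} (hx : IsOfFinAddOrder x) :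
    recipOrder x ≤ (if addOrderOf x = q then 1 / (q : ℝ) else 0) + recipOrder (q • x) := by
  have := Fact.mk hq
  have hite : (0 : ℝ) ≤ if addOrderOf x = q then 1 / (q : ℝ) else 0 := by split_ifs <;> positivity
  rcases eq_or_ne x 0 with rfl | hx0
  · rw [recipOrder_zero]
    exact add_nonneg hite (recipOrder_nonneg _)
  rw [recipOrder_of_ne_zero hx0]
  by_cases hqx : q • x = 0
  · rw [addOrderOf_eq_prime hqx hx0, if_pos rfl]
    exact le_add_of_nonneg_right (recipOrder_nonneg _)
  · refine le_add_of_nonneg_of_le hite (inv_le_recipOrder hqx hx.addOrderOf_pos.ne' ?_)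
    rw [smul_comm, addOrderOf_nsmul_eq_zero, smul_zero]

theorem recipOrder_le_nsmul_of_mul_pow_nsmul_eq_zero {p q m : ℕ} (hp : p.Prime) (hq : q.Prime)
    (hpq : p ≠ q) {x : G} (hx : (q * p ^ m) • x = 0) :
    recipOrder x ≤ (if addOrderOf x = p then 1 / (p : ℝ) else 0) +
      (1 - 1 / (p : ℝ)) * (if addOrderOf x = q then 1 / (q : ℝ) else 0) +
      1 / (p : ℝ) * recipOrder (p • x) := by
  have := Fact.mk hp
  have := Fact.mk hq
  have hp1 : 0 ≤ 1 - 1 / (p : ℝ) := sub_nonneg.2 <| one_div (p : ℝ) ▸ Nat.cast_inv_le_one p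
  have ite_nonneg (r : ℕ) : (0 : ℝ) ≤ if addOrderOf x = r then 1 / (r : ℝ) else 0 := by
    split_ifs <;> positivity
  have hrec : 0 ≤ 1 / (p : ℝ) * recipOrder (p • x) :=
    mul_nonneg (by positivity) (recipOrder_nonneg _)
  have hq' := mul_nonneg hp1 (ite_nonneg q)
  rcases eq_or_ne x 0 with rfl | hx0
  · rw [recipOrder_zero]
    exact add_nonneg (add_nonneg (ite_nonneg p) hq') hrec
  rw [recipOrder_of_ne_zero hx0]
  by_cases hpx : p • x = 0
  · rw [addOrderOf_eq_prime hpx hx0, if_pos rfl, add_assoc]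
    rw [addOrderOf_eq_prime hpx hx0] at hq'
    exact le_add_of_nonneg_right (add_nonneg hq' hrec)
  rw [recipOrder_of_ne_zero hpx]
  by_cases hdvd : p ∣ addOrderOf x
  · refine le_add_of_nonneg_of_le (add_nonneg (ite_nonneg p) hq') (le_of_eq ?_)
    have hp0 : (p : ℝ) ≠ 0 := mod_cast hp.ne_zero
    rw [addOrderOf_nsmul_of_dvd hp.ne_zero hdvd, Nat.cast_div hdvd hp0, one_div_mul_one_div,
      mul_div_cancel₀ _ hp0]
  · have hcop : (addOrderOf x).Coprime p := (hp.coprime_iff_not_dvd.2 hdvd).symm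
    have hqx : q • x = 0 := by
      rw [← addOrderOf_dvd_iff_nsmul_eq_zero] at hx ⊢
      exact (hcop.pow_right m).dvd_of_dvd_mul_right hx
    rw [hcop.addOrderOf_nsmul, addOrderOf_eq_prime hqx hx0, if_neg hpq.symm, if_pos rfl]
    exact le_of_eq (by ring)

variable {ι : Type*} [Fintype ι] {g : ι → G} {p q m n : ℕ}

theorem weight_le_orderCount_add_weight_nsmul (hq : q.Prime) (hg : ∀ i, IsOfFinAddOrder (g i)) :
    weight g ≤ orderCount g q * (1 / (q : ℝ)) + weight fun i => q • g i := by
  rw [← sum_ite_addOrderOf_eq, weight, weight, ← sum_add_distrib]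
  exact sum_le_sum fun i _ => recipOrder_le_nsmul hq (hg i)

theorem weight_le_of_mul_pow_nsmul_eq_zero (hp : p.Prime) (hq : q.Prime) (hpq : p ≠ q)
    (hg : ∀ i, (q * p ^ m) • g i = 0) :
    weight g ≤ orderCount g p * (1 / (p : ℝ)) +
      (1 - 1 / (p : ℝ)) * (orderCount g q * (1 / (q : ℝ))) +
      1 / (p : ℝ) * weight fun i => p • g i := by
  rw [← sum_ite_addOrderOf_eq, ← sum_ite_addOrderOf_eq, weight, weight, mul_sum, mul_sum,
    ← sum_add_distrib, ← sum_add_distrib]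
  exact sum_le_sum fun i _ => recipOrder_le_nsmul_of_mul_pow_nsmul_eq_zero hp hq hpq (hg i)

theorem mul_one_div_mul_le {c p : ℕ} (h : c ≤ p) (M : ℕ) :
    (c : ℝ) * (1 / ((p * M : ℕ) : ℝ)) ≤ 1 / (M : ℝ) := by
  rcases Nat.eq_zero_or_pos p with rfl | hp
  · rw [Nat.le_zero.1 h, Nat.cast_zero, zero_mul]
    positivity
  · calc (c : ℝ) * (1 / ((p * M : ℕ) : ℝ)) ≤ p * (1 / ((p * M : ℕ) : ℝ)) := by gcongr
      _ = 1 / (M : ℝ) := by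
        push_cast
        field_simp

theorem mul_one_div_le_sub {c q n : ℕ} (hq : 0 < q) (h : c < q * n) :
    (c : ℝ) * (1 / (q : ℝ)) ≤ n - 1 / q := by
  have : (c : ℝ) + 1 ≤ q * n := mod_cast h
  rw [mul_one_div, div_le_iff₀ (mod_cast hq), sub_mul, one_div_mul_cancel (mod_cast hq.ne')]
  linarith

theorem sum_one_div_pow_eq {x : ℝ} (hx : 1 < x) (m : ℕ) :
    ∑ k ∈ range m, 1 / x ^ k = x / (x - 1) * (1 - 1 / x ^ m) := by
  have hx1 : x - 1 ≠ 0 := (sub_pos.2 hx).ne'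
  induction m with
  | zero => simp
  | succ m ih =>
    rw [sum_range_succ, ih]
    field_simp
    ring

theorem one_div_mul_sum_one_div_pow_le {x y : ℝ} (hx : 2 ≤ x) (hy : 2 ≤ y) (m : ℕ) :
    1 / y * ∑ k ∈ range m, 1 / x ^ k ≤ 1 / x + 1 / y := by
  have hsum : ∑ k ∈ range m, 1 / x ^ k ≤ x / (x - 1) := by
    rw [sum_one_div_pow_eq (by linarith)]
    exact mul_le_of_le_one_right (div_nonneg (by linarith) (by linarith))
      (sub_le_self 1 (by positivity))
  have hxy : x / (x - 1) ≤ y / x + 1 := by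
    rw [div_add_one (by positivity), div_le_div_iff₀ (by linarith) (by positivity)]
    nlinarith
  calc 1 / y * ∑ k ∈ range m, 1 / x ^ k ≤ 1 / y * (y / x + 1) := by gcongr; exact hsum.trans hxy
    _ = 1 / x + 1 / y := by field_simp

variable [DecidableEq ι]

theorem IsFactorial.weight_le_of_pow_nsmul_eq_zero (hg : IsFactorial g) (hp : p.Prime)
    [Finite (nsmulAddMonoidHom (α := G) p).ker]
    (hcard : Nat.card (nsmulAddMonoidHom (α := G) p).ker ≤ p) (hpg : ∀ i, p ^ m • g i = 0) :
    weight g ≤ ∑ k ∈ range m, 1 / (p : ℝ) ^ k := by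
  obtain ⟨g', -, hpg', hle, hcount⟩ := hg.exists_orderCount_le hp hcard hpg
  refine hle.trans ?_
  rw [weight_eq_sum_divisors (pow_ne_zero m hp.ne_zero) hpg', sum_divisors_prime_pow_erase_one hp]
  refine sum_le_sum fun k _ => ?_
  rw [pow_succ', ← Nat.cast_pow p k]
  exact mul_one_div_mul_le (hcount _ (pow_ne_zero k hp.ne_zero)) _

omit [DecidableEq ι] in
theorem weight_le_of_orderCount_lt (hp : p.Prime) (hq : q.Prime) (hpq : p ≠ q)
    (hg : ∀ i, (q * p ^ (m + 1)) • g i = 0) (hcount : ∀ M ≠ 0, orderCount g (p * M) ≤ p)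
    (hgp : orderCount g p < p) (hgq : orderCount g q < q * n) :
    weight g ≤ ∑ k ∈ range (m + 1), 1 / (p : ℝ) ^ k + n := by
  have hp2 : (2 : ℝ) ≤ p := mod_cast hp.two_le
  have hq2 : (2 : ℝ) ≤ q := mod_cast hq.two_le
  have hpp := mul_one_div_le_sub hp.pos (n := 1) (by rwa [mul_one])
  have hqq := mul_one_div_le_sub hq.pos hgq
  have hpow (k : ℕ) : (orderCount g (p ^ (k + 1)) : ℝ) * (1 / (p ^ (k + 1) : ℕ)) ≤
      1 / (p : ℝ) ^ k := by
    rw [pow_succ', ← Nat.cast_pow p k]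
    exact mul_one_div_mul_le (hcount _ (pow_ne_zero k hp.ne_zero)) _
  have hqpow (k : ℕ) : (orderCount g (q * p ^ (k + 1)) : ℝ) * (1 / (q * p ^ (k + 1) : ℕ)) ≤
      1 / (q : ℝ) * (1 / (p : ℝ) ^ k) := by
    have h := mul_one_div_mul_le (hcount _ (mul_ne_zero hq.ne_zero (pow_ne_zero k hp.ne_zero)))
      (q * p ^ k)
    rw [one_div_mul_one_div, ← Nat.cast_pow p k, ← Nat.cast_mul, pow_succ', mul_left_comm]
    exact h
  have hgeom := one_div_mul_sum_one_div_pow_le hp2 hq2 (m + 1)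
  rw [mul_sum] at hgeom
  rw [weight_eq_sum_divisors (mul_ne_zero hq.ne_zero (pow_ne_zero _ hp.ne_zero)) hg,
    sum_divisors_mul_prime_pow_erase_one hp hq hpq, sum_range_succ', sum_range_succ' _ (m + 1),
    sum_range_succ' fun k => 1 / (p : ℝ) ^ k]
  simp only [zero_add, pow_one, pow_zero, mul_one, div_one, Nat.cast_one] at hpp ⊢
  have h₁ := sum_le_sum fun k (_ : k ∈ range m) => hpow (k + 1)
  have h₂ := sum_le_sum fun k (_ : k ∈ range (m + 1)) => hqpow k
  linarith

omit [DecidableEq ι] in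
theorem weight_le_of_weight_nsmul_le (hp : p.Prime) (hq : q.Prime) (hpq : p ≠ q)
    (hg : ∀ i, (q * p ^ (m + 1)) • g i = 0) (hgp : orderCount g p ≤ p)
    (hgq : orderCount g q * (1 / (q : ℝ)) ≤ n)
    (hw : (weight fun i => p • g i) ≤ ∑ k ∈ range m, 1 / (p : ℝ) ^ k + n) :
    weight g ≤ ∑ k ∈ range (m + 1), 1 / (p : ℝ) ^ k + n := by
  have hp1 : 0 ≤ 1 - 1 / (p : ℝ) := sub_nonneg.2 <| one_div (p : ℝ) ▸ Nat.cast_inv_le_one p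
  have hgp' : orderCount g p * (1 / (p : ℝ)) ≤ 1 := by
    simpa only [mul_one, Nat.cast_one, div_one] using mul_one_div_mul_le hgp 1
  calc weight g ≤ _ := weight_le_of_mul_pow_nsmul_eq_zero hp hq hpq hg
    _ ≤ 1 + (1 - 1 / (p : ℝ)) * n + 1 / p * (∑ k ∈ range m, 1 / (p : ℝ) ^ k + n) := by gcongr
    _ = ∑ k ∈ range (m + 1), 1 / (p : ℝ) ^ k + n := by
      simp only [sum_range_succ', pow_succ', ← one_div_mul_one_div, ← mul_sum, pow_zero, div_one]
      ring

theorem IsFactorial.weight_le (hp : p.Prime) (hq : q.Prime) (hpq : p ≠ q)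
    [Finite (nsmulAddMonoidHom (α := G) p).ker] [Finite (nsmulAddMonoidHom (α := G) q).ker]
    (hcard : Nat.card (nsmulAddMonoidHom (α := G) p).ker ≤ p)
    (hN1 : N1 (nsmulAddMonoidHom (α := G) q).ker ≤ q * n) (hg : IsFactorial g)
    (hpqg : ∀ i, (q * p ^ m) • g i = 0) :
    weight g ≤ ∑ k ∈ range m, 1 / (p : ℝ) ^ k + n := by
  have count_q_le {g : ι → G} (hg : IsFactorial g) : orderCount g q * (1 / (q : ℝ)) ≤ n := by
    rw [mul_one_div, div_le_iff₀' (mod_cast hq.pos)]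
    exact_mod_cast (hg.orderCount_le_N1 hq).trans hN1
  induction m generalizing g with
  | zero =>
    rw [weight_eq_sum_divisors (mul_ne_zero hq.ne_zero (pow_ne_zero _ hp.ne_zero)) hpqg,
      sum_divisors_mul_prime_pow_erase_one hp hq hpq]
    simpa using count_q_le hg
  | succ m ih =>
    obtain ⟨g', hg', hpqg', hle, hcount⟩ := hg.exists_orderCount_le hp hcard hpqg
    refine hle.trans ?_
    rcases le_or_gt p (orderCount g' p) with hgp | hgp
    · have hcount_p : orderCount g' p ≤ p := by simpa only [mul_one] using hcount 1 one_ne_zero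
      refine weight_le_of_weight_nsmul_le hp hq hpq hpqg' hcount_p (count_q_le hg') ?_
      exact ih (hg'.nsmul hp ((N1_le_card.trans hcard).trans hgp)) fun i => by
        rw [← mul_smul, mul_assoc, ← pow_succ, hpqg']
    rcases le_or_gt (q * n) (orderCount g' q) with hgq | hgq
    · have hqg' := (hg'.nsmul hq (hN1.trans hgq)).weight_le_of_pow_nsmul_eq_zero hp hcard
        fun i => by rw [← mul_smul, mul_comm, hpqg']
      have hord (i) : IsOfFinAddOrder (g' i) := isOfFinAddOrder_iff_nsmul_eq_zero.2
        ⟨_, Nat.mul_pos hq.pos (pow_pos hp.pos _), hpqg' i⟩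
      linarith [weight_le_orderCount_add_weight_nsmul hq hord, count_q_le hg']
    · exact weight_le_of_orderCount_lt hp hq hpq hpqg' hcount hgp hgq

end UpperBound

section SignedCount

variable {G ι : Type*} [AddCommGroup G]

open Classical in
/-- The number of zero-sum subfamilies of `g` supported in `D`, those of odd length being counted
negatively. -/
noncomputable def signedCount (g : ι → G) (D : Finset ι) : ℤ :=
  ∑ I ∈ D.powerset with ∑ i ∈ I, g i = 0, (-1) ^ #I

theorem signedCount_empty (g : ι → G) : signedCount g ∅ = 1 := by
  simp [signedCount, filter_singleton]

theorem signedCount_comp_coe (g : ι → G) (D : Finset ι) :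
    signedCount (fun i : D => g i) univ = signedCount g D := by
  classical
  refine sum_nbij' (fun I => I.map (.subtype _)) (fun I => I.subtype (· ∈ D)) ?_ ?_ ?_ ?_ ?_
  · intro I hI
    rw [mem_filter, mem_powerset] at hI ⊢
    exact ⟨fun _ => property_of_mem_map_subtype I, (sum_map _ _ _).trans hI.2⟩
  · intro I hI
    rw [mem_filter, mem_powerset] at hI ⊢
    refine ⟨subset_univ _, (sum_map (I.subtype (· ∈ D)) (.subtype _) g).symm.trans ?_⟩
    rw [subtype_map_of_mem hI.1, hI.2]
  · intro I _
    ext i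
    simp
  · intro I hI
    exact subtype_map_of_mem (mem_powerset.1 (mem_filter.1 hI).1)
  · intro I _
    rw [card_map]

theorem signedCount_union [Fintype ι] [DecidableEq ι] {g : ι → G} (hg : IsFactorial g)
    {D E U S : Finset ι} (hUS : Disjoint U S) (hS : ∑ i ∈ S, g i = 0) (hDU : D ⊆ U) (hES : E ⊆ S) :
    signedCount g (D ∪ E) = signedCount g D * signedCount g E := by
  classical
  have hDE : Disjoint D E := disjoint_of_subset_left hDU (disjoint_of_subset_right hES hUS)
  rw [signedCount, signedCount, signedCount, sum_mul_sum, ← sum_product']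
  have inter_eq {I : Finset ι} (hI : I ⊆ D ∪ E) : I ∩ D = I \ S ∧ I ∩ E = I ∩ S := by
    have hDS := disjoint_left.1 (disjoint_of_subset_left hDU hUS)
    grind
  refine sum_nbij' (fun I => (I ∩ D, I ∩ E)) (fun X => X.1 ∪ X.2) ?_ ?_ ?_ ?_ ?_
  · intro I hI
    rw [mem_filter, mem_powerset] at hI
    simp only [mem_product, mem_filter, mem_powerset, inter_subset_right, true_and]
    rw [(inter_eq hI.1).1, (inter_eq hI.1).2]
    exact ⟨hg.sum_sdiff_eq_zero hI.2 hS, hg.sum_inter_eq_zero I S hI.2 hS⟩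
  · rintro ⟨I, J⟩ h
    simp only [mem_product, mem_filter, mem_powerset] at h ⊢
    refine ⟨union_subset_union h.1.1 h.2.1, ?_⟩
    rw [sum_union (disjoint_of_subset_left h.1.1 (disjoint_of_subset_right h.2.1 hDE)), h.1.2,
      h.2.2, add_zero]
  · intro I hI
    rw [← inter_union_distrib_left, inter_eq_left.2 (mem_powerset.1 (mem_filter.1 hI).1)]
  · rintro ⟨I, J⟩ h
    simp only [mem_product, mem_filter, mem_powerset] at h
    have := disjoint_left.1 hDE
    ext <;> grind
  · intro I hI
    have hIDE := mem_powerset.1 (mem_filter.1 hI).1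
    have hdisj : Disjoint (I ∩ D) (I ∩ E) :=
      disjoint_of_subset_left inter_subset_right (disjoint_of_subset_right inter_subset_right hDE)
    rw [← pow_add, ← card_union_of_disjoint hdisj, ← inter_union_distrib_left, inter_eq_left.2 hIDE]

variable {ℓ : ℕ} {g : Fin ℓ → G}

theorem IsMinZeroSum.signedCount_eq {S : Finset (Fin ℓ)} (hS : IsMinZeroSum g S) :
    signedCount g S = 1 + (-1) ^ #S := by
  classical
  rw [signedCount, show ({I ∈ S.powerset | ∑ i ∈ I, g i = 0} : Finset _) = {∅, S} from ?_,
    sum_pair hS.1.ne_empty.symm, card_empty, pow_zero]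
  ext I
  simp only [mem_filter, mem_powerset, mem_insert, mem_singleton]
  constructor
  · rintro ⟨hIS, hI⟩
    exact I.eq_empty_or_nonempty.imp_right fun hne => hS.eq_of_subset hIS hne hI
  · rintro (rfl | rfl)
    exacts [⟨empty_subset S, sum_empty⟩, ⟨Subset.rfl, hS.2.1⟩]

theorem IsMinZeroSum.signedCount_of_ssubset {S E : Finset (Fin ℓ)} (hS : IsMinZeroSum g S)
    (hE : E ⊂ S) : signedCount g E = 1 := by
  classical
  rw [signedCount, show ({I ∈ E.powerset | ∑ i ∈ I, g i = 0} : Finset _) = {∅} from ?_,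
    sum_singleton, card_empty, pow_zero]
  ext I
  simp only [mem_filter, mem_powerset, mem_singleton]
  refine ⟨fun ⟨hIE, hI⟩ => ?_, by rintro rfl; exact ⟨empty_subset E, sum_empty⟩⟩
  by_contra hne
  exact hS.2.2 I (hIE.trans_ssubset hE) (nonempty_iff_ne_empty.2 hne) hI

theorem IsMinZeroSum.exists_signedCount_eq {S : Finset (Fin ℓ)} (hS : IsMinZeroSum g S)
    (hne : ∀ i, g i ≠ 0) :
    ∃ E ⊆ S, 2 * #S ≤ 3 * #E ∧ ∃ r, signedCount g E = 2 ^ r := by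
  have hS2 := hS.two_le_card hne
  rcases Nat.even_or_odd #S with heven | hodd
  · refine ⟨S, Subset.rfl, by omega, 1, ?_⟩
    rw [hS.signedCount_eq, heven.neg_one_pow]
    rfl
  · obtain ⟨s, hs⟩ := hS.1
    refine ⟨S.erase s, erase_subset s S, ?_, 0, hS.signedCount_of_ssubset (erase_ssubset hs)⟩
    rw [card_erase_of_mem hs]
    obtain ⟨k, hk⟩ := hodd
    omega

theorem IsFactorial.exists_signedCount_eq (hg : IsFactorial g) (hne : ∀ i, g i ≠ 0) :
    ∃ D : Finset (Fin ℓ), 2 * ℓ ≤ 3 * #D ∧ ∃ r, signedCount g D = 2 ^ r := by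
  suffices ∃ D ⊆ univ, 2 * #(univ : Finset (Fin ℓ)) ≤ 3 * #D ∧ ∃ r, signedCount g D = 2 ^ r by
    obtain ⟨D, -, hD⟩ := this
    exact ⟨D, by simpa only [card_univ, Fintype.card_fin] using hD⟩
  refine zeroSum_induction (motive := fun U => ∃ D ⊆ U, 2 * #U ≤ 3 * #D ∧
    ∃ r, signedCount g D = 2 ^ r) ⟨∅, Subset.rfl, le_rfl, 0, signedCount_empty g⟩ ?_ univ
    hg.sum_eq_zero
  rintro U S hUS - hS ⟨D, hDU, hD, r, hr⟩
  obtain ⟨E, hES, hE, s, hs⟩ := hS.exists_signedCount_eq hne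
  refine ⟨D ∪ E, union_subset_union hDU hES, ?_, r + s, ?_⟩
  · rw [card_union_of_disjoint hUS,
      card_union_of_disjoint (disjoint_of_subset_left hDU (disjoint_of_subset_right hES hUS))]
    omega
  · rw [signedCount_union hg hUS hS.2.1 hDU hES, hr, hs, pow_add]

end SignedCount

section ChevalleyWarning

theorem card_filter_support_eq {σ K : Type*} [Fintype σ] [DecidableEq σ] [Fintype K]
    [DecidableEq K] [Zero K] (I : Finset σ) :
    #{x : σ → K | ({i | x i ≠ 0} : Finset σ) = I} = (Fintype.card K - 1) ^ #I := by
  have : ({x : σ → K | ({i | x i ≠ 0} : Finset σ) = I} : Finset (σ → K)) =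
      Fintype.piFinset fun i => if i ∈ I then univ.erase 0 else {0} := by
    ext x
    rw [mem_filter_univ, Fintype.mem_piFinset, Finset.ext_iff]
    refine forall_congr' fun i => ?_
    by_cases hi : i ∈ I <;> simp [hi]
  simp only [this, Fintype.card_piFinset, apply_ite card, card_erase_of_mem (mem_univ (0 : K)),
    card_univ, card_singleton, prod_ite_mem, univ_inter, prod_const]

open MvPolynomial in
theorem dvd_signedCount {σ κ : Type*} [Fintype σ] [Fintype κ] {p : ℕ} [Fact p.Prime]
    (h : σ → κ → ZMod p) (hcard : (p - 1) * Fintype.card κ < Fintype.card σ) :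
    (p : ℤ) ∣ signedCount h univ := by
  classical
  let f (a : κ) : MvPolynomial σ (ZMod p) := ∑ i, C (h i a) * X i ^ (p - 1)
  have hdeg : ∑ a, (f a).totalDegree < Fintype.card σ := by
    refine lt_of_le_of_lt (sum_le_card_nsmul univ _ (p - 1) fun a _ =>
      totalDegree_finsetSum_le fun i _ => (totalDegree_mul _ _).trans ?_) ?_
    · rw [totalDegree_C, totalDegree_X_pow, zero_add]
    · rwa [card_univ, smul_eq_mul, mul_comm]
  have eval_eq (x : σ → ZMod p) : (∀ a, eval x (f a) = 0) ↔ ∑ i with x i ≠ 0, h i = 0 := by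
    rw [funext_iff]
    refine forall_congr' fun a => ?_
    simp [f, Finset.sum_apply, sum_filter, ZMod.pow_card_sub_one]
  have hsol := char_dvd_card_solutions_of_fintype_sum_lt p hdeg
  simp only [eval_eq] at hsol
  rw [Fintype.card_subtype, ← CharP.cast_eq_zero_iff (ZMod p), card_eq_sum_card_fiberwise
    (f := fun x => ({i | x i ≠ 0} : Finset σ)) (t := {I | ∑ i ∈ I, h i = 0})
    (fun x hx => by simpa using hx)] at hsol
  rw [← ZMod.intCast_zmod_eq_zero_iff_dvd, ← hsol, signedCount, powerset_univ]
  push_cast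
  refine sum_congr (by congr) fun I hI => ?_
  have hfiber (x : σ → ZMod p) : (∑ i with x i ≠ 0, h i = 0 ∧ ({i | x i ≠ 0} : Finset σ) = I) ↔
      ({i | x i ≠ 0} : Finset σ) = I := by
    refine and_iff_right_of_imp ?_
    rintro rfl
    exact (mem_filter.1 hI).2
  simp only [filter_filter, hfiber, card_filter_support_eq, ZMod.card, Nat.cast_pow,
    Nat.cast_pred (Fact.out : p.Prime).pos, ZMod.natCast_self, zero_sub]

theorem two_mul_N1_pi_zmod_le {κ : Type*} [Fintype κ] {p : ℕ} [Fact p.Prime] (hp2 : p ≠ 2) :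
    2 * N1 (κ → ZMod p) ≤ 3 * ((p - 1) * Fintype.card κ) := by
  classical
  suffices N1 (κ → ZMod p) ≤ 3 * ((p - 1) * Fintype.card κ) / 2 by omega
  refine N1_le fun ℓ g hg => ?_
  obtain ⟨D, hD, r, hr⟩ := hg.isFactorial.exists_signedCount_eq hg.1
  suffices #D ≤ (p - 1) * Fintype.card κ by omega
  by_contra! hlt
  have hdvd := dvd_signedCount (fun i : D => g i) (by rwa [Fintype.card_coe])
  rw [signedCount_comp_coe, hr] at hdvd
  have hp : p.Prime := Fact.out
  exact hp2 ((Nat.prime_dvd_prime_iff_eq hp Nat.prime_two).1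
    (hp.dvd_of_dvd_pow (n := r) (by exact_mod_cast hdvd)))

end ChevalleyWarning

section LowerBound

variable {G : Type*} [AddCommGroup G]

theorem addOrderOf_sub_nsmul {x : G} {q j : ℕ} (hx : q ^ j • x = 0) :
    addOrderOf (x - q • x) = addOrderOf x := by
  refine addOrderOf_eq_addOrderOf_iff.2 fun k => ?_
  refine ⟨fun h => ?_, fun h => by rw [smul_sub, smul_comm k, h, smul_zero, sub_zero]⟩
  have hfix : q • k • x = k • x := by rwa [smul_sub, sub_eq_zero, smul_comm k, eq_comm] at h
  have hfix_pow (i : ℕ) : q ^ i • k • x = k • x := by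
    induction i with
    | zero => rw [pow_zero, one_smul]
    | succ i ih => rw [pow_succ', mul_smul, ih, hfix]
  rw [← hfix_pow j, smul_comm, hx, smul_zero]

/-- The `q`-term zero-sum family `x - q • x, x, …, x`: the block by which UFIMs of large cross
number are built up. -/
def block (q : ℕ) [NeZero q] (x : G) (j : Fin q) : G := x - if j = 0 then q • x else 0

section Block

variable {q : ℕ} [NeZero q] {x : G}

theorem sum_block_eq_zsmul (J : Finset (Fin q)) :
    ∑ j ∈ J, block q x j = (#J - if 0 ∈ J then (q : ℤ) else 0) • x := by
  simp only [block, sum_sub_distrib, sum_const, sum_ite_eq', sub_smul, ite_smul, natCast_zsmul,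
    zero_smul]

theorem sum_block : ∑ j, block q x j = 0 := by
  rw [sum_block_eq_zsmul, if_pos (mem_univ 0), card_univ, Fintype.card_fin, sub_self, zero_smul]

theorem eq_empty_or_univ_of_sum_block_mem {H : AddSubgroup G}
    (hx : ∀ c : ℤ, c • x ∈ H → (q : ℤ) ∣ c) {J : Finset (Fin q)} (hJ : ∑ j ∈ J, block q x j ∈ H) :
    J = ∅ ∨ J = univ := by
  rw [sum_block_eq_zsmul] at hJ
  have hdvd : q ∣ #J := by
    refine Int.natCast_dvd_natCast.1 ((dvd_sub_left ?_).1 (hx _ hJ))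
    split_ifs
    exacts [dvd_rfl, dvd_zero _]
  rcases (#J).eq_zero_or_pos with h | h
  · exact Or.inl (card_eq_zero.1 h)
  · exact Or.inr ((card_eq_iff_eq_univ J).1 <|
      (card_le_univ J).antisymm <| (Fintype.card_fin q).symm ▸ Nat.le_of_dvd h hdvd)

theorem addOrderOf_block {j : ℕ} (hx : q ^ j • x = 0) (i : Fin q) :
    addOrderOf (block q x i) = addOrderOf x := by
  rw [block]
  split_ifs
  exacts [addOrderOf_sub_nsmul hx, by rw [sub_zero]]

theorem block_ne_zero {j : ℕ} (hx : q ^ j • x = 0) (hx0 : x ≠ 0) (i : Fin q) : block q x i ≠ 0 := by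
  rwa [← AddMonoid.addOrderOf_eq_one_iff.ne, addOrderOf_block hx,
    AddMonoid.addOrderOf_eq_one_iff.ne]

theorem weight_block {j : ℕ} (hx : q ^ j • x = 0) (hx0 : x ≠ 0) :
    weight (block q x) = q / addOrderOf x := by
  simp only [weight, recipOrder_of_ne_zero (block_ne_zero hx hx0 _), addOrderOf_block hx,
    sum_const, card_univ, Fintype.card_fin, nsmul_eq_mul, mul_one_div]

end Block

/-- `w` is the cross number of a UFIM with terms in `H`. -/
def AttainsCrossNum (H : AddSubgroup G) (w : ℝ) : Prop :=
  ∃ (ℓ : ℕ) (g : Fin ℓ → G), IsUFIM g ∧ (∀ i, g i ∈ H) ∧ crossNum g = w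

theorem IsFactorial.attainsCrossNum {ι : Type*} [Fintype ι] [DecidableEq ι] {g : ι → G}
    (hg : IsFactorial g) (hne : ∀ i, g i ≠ 0) {H : AddSubgroup G} (hH : ∀ i, g i ∈ H) :
    AttainsCrossNum H (weight g) :=
  ⟨_, _, hg.isUFIM_comp_equivFin hne, fun _ => hH _, (crossNum_eq_weight fun _ => hne _).trans <|
    (Fintype.equivFin ι).symm.sum_comp fun i => recipOrder (g i)⟩

namespace AttainsCrossNum

theorem zero (H : AddSubgroup G) : AttainsCrossNum H 0 := by
  have h : IsFactorial (Fin.elim0 : Fin 0 → G) :=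
    .of_sum_eq_zero_imp rfl fun I _ => Or.inl I.eq_empty_of_isEmpty
  simpa only [weight, univ_eq_empty, sum_empty] using
    h.attainsCrossNum (fun i => i.elim0) (H := H) fun i => i.elim0

theorem mono {H K : AddSubgroup G} {w : ℝ} (hH : AttainsCrossNum H w) (hHK : H ≤ K) :
    AttainsCrossNum K w := by
  obtain ⟨ℓ, g, hg, hgH, hw⟩ := hH
  exact ⟨ℓ, g, hg, fun i => hHK (hgH i), hw⟩

theorem add_div_addOrderOf {H K : AddSubgroup G} {w : ℝ} (hH : AttainsCrossNum H w) (hHK : H ≤ K)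
    {x : G} (hxK : x ∈ K) {q j : ℕ} (hq : 1 < q) (hqx : q ^ j • x = 0)
    (hx : ∀ c : ℤ, c • x ∈ H → (q : ℤ) ∣ c) : AttainsCrossNum K (w + q / addOrderOf x) := by
  obtain ⟨ℓ, g, hg, hgH, rfl⟩ := hH
  have : NeZero q := ⟨by omega⟩
  have hx0 : x ≠ 0 := by
    rintro rfl
    have := hx 1 (by rw [smul_zero]; exact H.zero_mem)
    exact hq.ne' (Nat.dvd_one.1 (Int.natCast_dvd_natCast.1 this))
  have sum_block_eq_zero {J : Finset (Fin q)} (hJ : ∑ j ∈ J, block q x j ∈ H) :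
      ∑ j ∈ J, block q x j = 0 := by
    rcases eq_empty_or_univ_of_sum_block_mem hx hJ with rfl | rfl
    exacts [sum_empty, sum_block]
  have hblock : IsFactorial (block q x) := .of_sum_eq_zero_imp sum_block fun J hJ =>
    eq_empty_or_univ_of_sum_block_mem hx (hJ ▸ H.zero_mem)
  have hfac : IsFactorial (Sum.elim g (block q x)) := hg.isFactorial.sumElim hblock
    fun I J hIJ => sum_block_eq_zero <| by
      rw [eq_neg_of_add_eq_zero_right hIJ]
      exact H.neg_mem (H.sum_mem fun i _ => hgH i)
  have hK (k) : Sum.elim g (block q x) k ∈ K := by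
    rcases k with i | j
    · exact hHK (hgH i)
    · refine K.sub_mem hxK ?_
      split_ifs
      exacts [K.nsmul_mem hxK q, K.zero_mem]
  convert hfac.attainsCrossNum (Sum.forall.2 ⟨hg.1, block_ne_zero hqx hx0⟩) hK using 1
  rw [crossNum_eq_weight hg.1, ← weight_block hqx hx0]
  exact (Fintype.sum_sum_type fun k => recipOrder (Sum.elim g (block q x) k)).symm

theorem zmultiples {q : ℕ} (hq : 1 < q) {m : ℕ} {x : G} (hx : addOrderOf x = q ^ m) :
    AttainsCrossNum (.zmultiples x) (∑ k ∈ range m, 1 / (q : ℝ) ^ k) := by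
  induction m generalizing x with
  | zero => exact zero _
  | succ m ih =>
    have hqx : addOrderOf (q • x) = q ^ m := by
      rw [addOrderOf_nsmul_of_dvd (by omega) (hx ▸ dvd_pow_self q m.succ_ne_zero), hx, pow_succ,
        Nat.mul_div_cancel _ (by omega)]
    have hx_mem : x ∈ AddSubgroup.zmultiples x := AddSubgroup.mem_zmultiples x
    convert (ih hqx).add_div_addOrderOf
      (AddSubgroup.zmultiples_le_of_mem (AddSubgroup.nsmul_mem _ hx_mem q)) hx_mem hq
      (hx ▸ addOrderOf_nsmul_eq_zero x) ?_ using 1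
    · rw [sum_range_succ, hx, pow_succ', Nat.cast_mul, Nat.cast_pow,
        div_mul_cancel_left₀ (by positivity), one_div]
    · rintro c ⟨d, hd⟩
      have hdvd : (q : ℤ) ^ (m + 1) ∣ c - d * q := by
        rw [← Nat.cast_pow, ← hx, addOrderOf_dvd_iff_zsmul_eq_zero, sub_smul, mul_smul,
          natCast_zsmul, sub_eq_zero]
        exact hd.symm
      exact (dvd_sub_left (dvd_mul_left _ d)).1 ((dvd_pow_self _ m.succ_ne_zero).trans hdvd)

theorem add_card {H : AddSubgroup G} {w : ℝ} (hH : AttainsCrossNum H w) {κ : Type*} [DecidableEq κ]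
    {q : ℕ} (hq : 1 < q) {y : κ → G} {φ : κ → G →+ ZMod q} (hφH : ∀ a, H ≤ (φ a).ker)
    (hφy : ∀ a b, φ a (y b) = if a = b then 1 else 0) (hy : ∀ b, q • y b = 0) (s : Finset κ) :
    AttainsCrossNum (⨅ a ∉ s, (φ a).ker) (w + #s) := by
  have zsmul_eq (a : κ) (c : ℤ) : φ a (c • y a) = c := by
    rw [map_zsmul, hφy, if_pos rfl, zsmul_one]
  induction s using Finset.induction_on with
  | empty =>
    simpa only [card_empty, Nat.cast_zero, add_zero] using hH.mono (le_iInf₂ fun a _ => hφH a)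
  | insert a s ha ih =>
    have hord : addOrderOf (y a) = q := by
      refine Nat.dvd_antisymm (addOrderOf_dvd_of_nsmul_eq_zero (hy a)) ?_
      rw [← Int.natCast_dvd_natCast, ← ZMod.intCast_zmod_eq_zero_iff_dvd, ← zsmul_eq a,
        natCast_zsmul, addOrderOf_nsmul_eq_zero, map_zero]
    convert ih.add_div_addOrderOf
      (le_iInf₂ fun b hb => iInf₂_le b (notMem_mono (subset_insert a s) hb))
      (x := y a) (j := 1) ?_ hq (by rw [pow_one, hy]) ?_ using 1
    · rw [card_insert_of_notMem ha, hord, div_self (by positivity), Nat.cast_succ, add_assoc]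
    · simp only [AddSubgroup.mem_iInf, AddMonoidHom.mem_ker, mem_insert, not_or]
      exact fun b hb => (hφy b a).trans (if_neg hb.1)
    · intro c hc
      simp only [AddSubgroup.mem_iInf, AddMonoidHom.mem_ker] at hc
      rw [← ZMod.intCast_zmod_eq_zero_iff_dvd, ← zsmul_eq a, hc a ha]

end AttainsCrossNum

end LowerBound

section Torsion

theorem N1_le_of_injective {G G' : Type*} [AddCommGroup G] [AddCommGroup G'] [Finite G']
    {φ : G →+ G'} (hφ : Function.Injective φ) : N1 G ≤ N1 G' := by
  refine N1_le fun ℓ g hg => IsUFIM.length_le_N1 (g := fun i => φ (g i)) <| isUFIM_iff.2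
    ⟨fun i => (map_ne_zero_iff φ hφ).2 (hg.1 i),
      hg.isFactorial.map φ ∅ (fun _ hi => absurd hi (notMem_empty _)) fun I hI => ?_⟩
  rwa [sdiff_empty, ← map_eq_zero_iff φ hφ]

variable {A B : Type*} [AddCommGroup A] [AddCommGroup B] {k : ℕ}

theorem fst_injective_on_nsmul_ker (hB : (Nat.card B).Coprime k) :
    Function.Injective ((AddMonoidHom.fst A B).comp (nsmulAddMonoidHom k).ker.subtype) := by
  refine (injective_iff_map_eq_zero _).2 fun ⟨x, hx⟩ hx1 => Subtype.ext (Prod.ext hx1 ?_)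
  exact hB.nsmul_right_bijective.injective (congr($hx.2).trans (smul_zero k).symm)

theorem snd_injective_on_nsmul_ker (hA : (Nat.card A).Coprime k) :
    Function.Injective ((AddMonoidHom.snd A B).comp (nsmulAddMonoidHom k).ker.subtype) := by
  refine (injective_iff_map_eq_zero _).2 fun ⟨x, hx⟩ hx2 => Subtype.ext (Prod.ext ?_ hx2)
  exact hA.nsmul_right_bijective.injective (congr($hx.1).trans (smul_zero k).symm)

theorem card_nsmul_ker_prod_le [Finite A] [IsAddCyclic A] (hk : 0 < k)
    (hB : (Nat.card B).Coprime k) : Nat.card (nsmulAddMonoidHom (α := A × B) k).ker ≤ k := by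
  classical
  have := Fintype.ofFinite A
  refine le_trans ?_ (IsAddCyclic.card_nsmul_eq_zero_le (α := A) hk)
  rw [← Fintype.card_subtype, ← Nat.card_eq_fintype_card]
  refine Nat.card_le_card_of_injective
    (fun x => ⟨x.1.1, congr($(x.2).1)⟩ : (nsmulAddMonoidHom (α := A × B) k).ker → _) ?_
  exact fun x y hxy => fst_injective_on_nsmul_ker hB congr($hxy)

theorem N1_nsmul_ker_prod_le [Finite B] (hA : (Nat.card A).Coprime k) :
    N1 (nsmulAddMonoidHom (α := A × B) k).ker ≤ N1 B :=
  N1_le_of_injective (snd_injective_on_nsmul_ker hA)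

end Torsion

section CrossNumber

variable {p q : ℕ}

theorem exists_isUFIM_crossNum_eq {κ : Type*} [Fintype κ] (hp : 1 < p) (hq : 1 < q) (m : ℕ) :
    ∃ (ℓ : ℕ) (g : Fin ℓ → ZMod (p ^ m) × (κ → ZMod q)), IsUFIM g ∧
      crossNum g = ∑ k ∈ range m, 1 / (p : ℝ) ^ k + Fintype.card κ := by
  classical
  have hx : addOrderOf ((1, 0) : ZMod (p ^ m) × (κ → ZMod q)) = p ^ m := by
    rw [Prod.addOrderOf_mk, ZMod.addOrderOf_one, addOrderOf_zero, Nat.lcm_one_right]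
  let φ (a : κ) : ZMod (p ^ m) × (κ → ZMod q) →+ ZMod q :=
    (Pi.evalAddMonoidHom _ a).comp (AddMonoidHom.snd _ _)
  obtain ⟨ℓ, g, hg, -, hw⟩ := (AttainsCrossNum.zmultiples hp hx).add_card hq (φ := φ)
    (y := fun b => (0, Pi.single b 1)) (fun a => AddSubgroup.zmultiples_le_of_mem rfl)
    (fun a b => Pi.single_apply b 1 a)
    (fun b => by rw [Prod.smul_mk, smul_zero, ← Pi.single_smul, nsmul_one, ZMod.natCast_self,
      Pi.single_zero, Prod.mk_zero_zero]) univ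
  exact ⟨ℓ, g, hg, hw⟩

theorem IsUFIM.crossNum_le {A B : Type*} [AddCommGroup A] [AddCommGroup B] [Finite A]
    [IsAddCyclic A] [Finite B] {m n : ℕ} (hp : p.Prime) [Fact q.Prime] [Module (ZMod q) B]
    (hpq : p ≠ q) (hA : Nat.card A = p ^ m) (hN1 : N1 B ≤ q * n) {ℓ : ℕ} {g : Fin ℓ → A × B}
    (hg : IsUFIM g) : crossNum g ≤ ∑ k ∈ range m, 1 / (p : ℝ) ^ k + n := by
  have hq : q.Prime := Fact.out
  have hcop : p.Coprime q := (Nat.coprime_primes hp hq).2 hpq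
  have hAq : (Nat.card A).Coprime q := hA ▸ hcop.pow_left m
  have hBp : (Nat.card B).Coprime p := by
    rw [Module.natCard_eq_pow_finrank (K := ZMod q), Nat.card_zmod]
    exact hcop.symm.pow_left _
  have htors (x : A × B) : (q * p ^ m) • x = 0 := by
    refine Prod.ext ?_ ?_
    · rw [Prod.smul_fst, mul_smul, ← hA, card_nsmul_eq_zero', smul_zero, Prod.fst_zero]
    · rw [Prod.smul_snd, mul_smul, ZModModule.char_nsmul_eq_zero q, Prod.snd_zero]
  rw [crossNum_eq_weight hg.1]
  exact hg.isFactorial.weight_le hp hq hpq (card_nsmul_ker_prod_le hp.pos hBp)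
    ((N1_nsmul_ker_prod_le hAq).trans hN1) fun i => htors (g i)

theorem sum_one_div_pow_eq_div {x : ℝ} (hx : 1 < x) {m : ℕ} (hm : 1 ≤ m) :
    ∑ k ∈ range m, 1 / x ^ k = (x ^ m - 1) / (x ^ m - x ^ (m - 1)) := by
  have hx1 : x - 1 ≠ 0 := (sub_pos.2 hx).ne'
  have hden : x ^ m - x ^ (m - 1) = x ^ (m - 1) * (x - 1) := by
    rw [mul_sub_one, pow_sub_one_mul (by omega)]
  rw [sum_one_div_pow_eq hx, hden, ← pow_sub_one_mul (by omega : m ≠ 0)]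
  field_simp

end CrossNumber

theorem K1_pm_3n_general {p q : ℕ} (hp : p.Prime) (hq : q.Prime) (hpq : p ≠ q) {m : ℕ}
    (hm : 1 ≤ m) {κ : Type*} [Fintype κ] (hN1 : N1 (κ → ZMod q) ≤ q * Fintype.card κ) :
    K1 (ZMod (p ^ m) × (κ → ZMod q)) = (∑ k ∈ range m, (1 : ℝ) / (p : ℝ) ^ k) + Fintype.card κ ∧
    K1 (ZMod (p ^ m) × (κ → ZMod q)) =
      ((p : ℝ) ^ m - 1) / ((p : ℝ) ^ m - (p : ℝ) ^ (m - 1)) + Fintype.card κ := by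
  rw [← sum_one_div_pow_eq_div (mod_cast hp.one_lt) hm, and_self]
  have : NeZero (p ^ m) := ⟨pow_ne_zero m hp.ne_zero⟩
  have : Fact q.Prime := ⟨hq⟩
  refine IsGreatest.csSup_eq ⟨exists_isUFIM_crossNum_eq hp.one_lt hq.one_lt m, ?_⟩
  rintro _ ⟨ℓ, g, hg, rfl⟩
  exact hg.crossNum_le hp hpq (Nat.card_zmod _) hN1

theorem N1_pi_zmod_three_le (κ : Type*) [Fintype κ] : N1 (κ → ZMod 3) ≤ 3 * Fintype.card κ := by
  have := two_mul_N1_pi_zmod_le (κ := κ) (p := 3) (by norm_num)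
  omega

/-- `K₁(C_{p^m} ⊕ C_3^n) = Σ_{k=1}^m 1/p^{k−1} + n = (p^m − 1)/(p^m − p^{m−1}) + n`
for a prime `p ≠ 3`. -/
theorem K1_pm_3n (p : ℕ) (hp : p.Prime) (hp3 : p ≠ 3) (m n : ℕ) (hm : 1 ≤ m) (hn : 1 ≤ n) :
    K1 (ZMod (p ^ m) × (Fin n → ZMod 3)) =
      (∑ k ∈ Finset.range m, (1 : ℝ) / (p : ℝ) ^ k) + n ∧
    K1 (ZMod (p ^ m) × (Fin n → ZMod 3)) =
      ((p : ℝ) ^ m - 1) / ((p : ℝ) ^ m - (p : ℝ) ^ (m - 1)) + n := by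
  simpa only [Fintype.card_fin] using
    K1_pm_3n_general hp Nat.prime_three hp3 hm (N1_pi_zmod_three_le (Fin n))
end

section
/- Let G be a finite abelian group, let S be a UFIM over G∖{0}, and let S_0 ⊆ S be a subfamily with σ(S_0) ≠ 0, where σ(S_0) denotes the sum of the elements of S_0. Then the indexed multiset (S∖S_0) ⊔ {σ(S_0)}, obtained from S by deleting the elements of S_0 and adjoining the single element σ(S_0), is also a UFIM over G∖{0}. -/
open Finset

/-!
A zero-sum family `g` with nonzero terms is a UFIM exactly when its zero-sum index sets are closed
under intersection. If the factorization `P` is unique, refining `{J, Jᶜ}` to a factorization shows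
that the zero-sum sets `J` are exactly the unions of parts of `P`; conversely, closure under
intersection forces minimal zero-sum sets that meet to coincide.

Merging the terms of `g` along the fibers of a map `f` gives a family whose sum over `J` is the sum
of `g` over the preimage of `J`, so closure under intersection passes from `g` to the merged family.
Replacing `S₀` by `σ(S₀)` is the merging that collapses `S₀` to a point.
-/

section Factorization

variable {G : Type*} [AddCommGroup G] {ℓ : ℕ} {g : Fin ℓ → G}

lemma exists_isMinZeroSum_subset_s7 {A : Finset (Fin ℓ)} (hne : A.Nonempty)
    (hA : ∑ i ∈ A, g i = 0) : ∃ I ⊆ A, IsMinZeroSum g I := by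
  obtain ⟨I, hIA, hI⟩ := exists_minimal_le_of_wellFoundedLT
    (fun J : Finset (Fin ℓ) => J.Nonempty ∧ ∑ i ∈ J, g i = 0) A ⟨hne, hA⟩
  exact ⟨I, hIA, hI.prop.1, hI.prop.2, fun J hJI hJne hJ => hI.not_prop_of_lt hJI ⟨hJne, hJ⟩⟩

lemma IsMinZeroSum.eq_of_subset_s7 {I J : Finset (Fin ℓ)} (hI : IsMinZeroSum g I) (hJI : J ⊆ I)
    (hne : J.Nonempty) (hJ : ∑ i ∈ J, g i = 0) : J = I := by
  by_contra hJI'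
  exact hI.2.2 J (hJI.ssubset_of_ne hJI') hne hJ

lemma exists_finpartition_isMinZeroSum_s7 (A : Finset (Fin ℓ)) (hA : ∑ i ∈ A, g i = 0) :
    ∃ P : Finpartition A, ∀ I ∈ P.parts, IsMinZeroSum g I := by
  induction A using Finset.strongInduction with
  | H A ih =>
    rcases A.eq_empty_or_nonempty with rfl | hne
    · exact ⟨Finpartition.empty _, by simp⟩
    obtain ⟨I, hIA, hI⟩ := exists_isMinZeroSum_subset_s7 hne hA
    have hrest : ∑ i ∈ A \ I, g i = 0 := by
      rw [sum_sdiff_eq_sub hIA, hA, hI.2.1, sub_zero]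
    obtain ⟨P, hP⟩ := ih (A \ I) (sdiff_ssubset hIA hI.1) hrest
    refine ⟨P.extend hI.1.ne_empty sdiff_disjoint (sdiff_union_of_subset hIA), ?_⟩
    simpa only [Finpartition.extend_parts, forall_mem_insert] using ⟨hI, hP⟩

lemma exists_isFactorization_le (R : Finpartition (univ : Finset (Fin ℓ)))
    (hR : ∀ A ∈ R.parts, ∑ i ∈ A, g i = 0) : ∃ P ≤ R, IsFactorization g P := by
  choose Q hQ using fun A hA => exists_finpartition_isMinZeroSum_s7 A (hR A hA)
  refine ⟨R.bind Q, fun I hI => ?_, fun I hI => ?_⟩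
  · obtain ⟨A, hA, hIA⟩ := Finpartition.mem_bind.1 hI
    exact ⟨A, hA, (Q A hA).le hIA⟩
  · obtain ⟨A, hA, hIA⟩ := Finpartition.mem_bind.1 hI
    exact hQ A hA I hIA

lemma exists_isFactorization_subset_or_disjoint (h0 : ∑ i, g i = 0) {J : Finset (Fin ℓ)}
    (hJ : ∑ i ∈ J, g i = 0) :
    ∃ P, IsFactorization g P ∧ ∀ I ∈ P.parts, I ⊆ J ∨ Disjoint I J := by
  have hparts : ∀ A ∈ (Finpartition.atomise univ {J}).parts, A = J ∨ A = Jᶜ := by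
    intro A hA
    obtain ⟨-, T, -, rfl⟩ := Finpartition.mem_atomise.1 hA
    by_cases hT : J ∈ T
    · exact .inl (by ext; simp [hT])
    · exact .inr (by ext; simp [hT])
  have hcompl : ∑ i ∈ Jᶜ, g i = 0 := by
    rw [← h0, ← sum_compl_add_sum J g, hJ, add_zero]
  obtain ⟨P, hPR, hP⟩ := exists_isFactorization_le (g := g) (Finpartition.atomise univ {J})
    fun A hA => by rcases hparts A hA with rfl | rfl <;> assumption
  refine ⟨P, hP, fun I hI => ?_⟩
  obtain ⟨A, hA, hIA⟩ := hPR hI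
  rcases hparts A hA with rfl | rfl
  · exact .inl hIA
  · exact .inr (disjoint_compl_left.mono_left hIA)

lemma IsFactorization.sum_eq_zero_of_subset_or_disjoint
    {P : Finpartition (univ : Finset (Fin ℓ))} (hP : IsFactorization g P) {J : Finset (Fin ℓ)}
    (hJ : ∀ I ∈ P.parts, I ⊆ J ∨ Disjoint I J) : ∑ i ∈ J, g i = 0 := by
  have hunion : {I ∈ P.parts | I ⊆ J}.biUnion id = J := by
    refine Subset.antisymm (biUnion_subset.2 fun I hI => (mem_filter.1 hI).2) fun i hi => ?_
    obtain ⟨I, hI, hiI⟩ := P.exists_mem (mem_univ i)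
    have hIJ : I ⊆ J := (hJ I hI).resolve_right fun hd => disjoint_left.1 hd hiI hi
    exact mem_biUnion.2 ⟨I, mem_filter.2 ⟨hI, hIJ⟩, hiI⟩
  rw [← hunion, sum_biUnion (P.disjoint.subset (coe_subset.2 (filter_subset _ _)))]
  exact sum_eq_zero fun I hI => (hP I (mem_filter.1 hI).1).2.1

lemma IsFactorization.sum_univ {P : Finpartition (univ : Finset (Fin ℓ))}
    (hP : IsFactorization g P) : ∑ i, g i = 0 :=
  hP.sum_eq_zero_of_subset_or_disjoint fun _ _ => .inl (subset_univ _)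

lemma IsFactorization.sum_eq_zero_iff_of_unique {P : Finpartition (univ : Finset (Fin ℓ))}
    (hP : IsFactorization g P) (hunique : ∀ Q, IsFactorization g Q → Q = P)
    {J : Finset (Fin ℓ)} :
    ∑ i ∈ J, g i = 0 ↔ ∀ I ∈ P.parts, I ⊆ J ∨ Disjoint I J := by
  refine ⟨fun hJ => ?_, hP.sum_eq_zero_of_subset_or_disjoint⟩
  obtain ⟨Q, hQ, hQJ⟩ := exists_isFactorization_subset_or_disjoint hP.sum_univ hJ
  exact hunique Q hQ ▸ hQJ

lemma IsFactorization.le_of_sum_inter_eq_zero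
    (hinter : ∀ J K : Finset (Fin ℓ),
      ∑ i ∈ J, g i = 0 → ∑ i ∈ K, g i = 0 → ∑ i ∈ J ∩ K, g i = 0)
    {P Q : Finpartition (univ : Finset (Fin ℓ))} (hP : IsFactorization g P)
    (hQ : IsFactorization g Q) : P ≤ Q := by
  intro I hI
  obtain ⟨i, hi⟩ := (hP I hI).1
  obtain ⟨J, hJ, hiJ⟩ := Q.exists_mem (mem_univ i)
  have hIJ : I ∩ J = I := (hP I hI).eq_of_subset_s7 inter_subset_left
    ⟨i, mem_inter.2 ⟨hi, hiJ⟩⟩ (hinter I J (hP I hI).2.1 (hQ J hJ).2.1)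
  exact ⟨J, hJ, inter_eq_left.1 hIJ⟩

theorem isUFIM_iff_sum_inter_eq_zero :
    IsUFIM g ↔ (∀ i, g i ≠ 0) ∧ ∑ i, g i = 0 ∧ ∀ J K : Finset (Fin ℓ),
      ∑ i ∈ J, g i = 0 → ∑ i ∈ K, g i = 0 → ∑ i ∈ J ∩ K, g i = 0 := by
  refine and_congr_right fun _ => ⟨?_, ?_⟩
  · rintro ⟨P, hP, hunique⟩
    refine ⟨hP.sum_univ, fun J K hJ hK => ?_⟩
    rw [hP.sum_eq_zero_iff_of_unique hunique] at hJ hK ⊢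
    intro I hI
    rcases hJ I hI with hIJ | hIJ
    · rcases hK I hI with hIK | hIK
      · exact .inl (subset_inter hIJ hIK)
      · exact .inr (hIK.mono_right inter_subset_right)
    · exact .inr (hIJ.mono_right inter_subset_left)
  · rintro ⟨h0, hinter⟩
    obtain ⟨P, hP : IsFactorization g P⟩ := exists_finpartition_isMinZeroSum_s7 univ h0
    exact ⟨P, hP, fun Q hQ => le_antisymm (hQ.le_of_sum_inter_eq_zero hinter hP)
      (hP.le_of_sum_inter_eq_zero hinter hQ)⟩

theorem IsUFIM.fiberwise_sum (hg : IsUFIM g) {ℓ' : ℕ} (f : Fin ℓ → Fin ℓ')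
    (hne : ∀ j, ∑ i with f i = j, g i ≠ 0) : IsUFIM fun j => ∑ i with f i = j, g i := by
  obtain ⟨-, h0, hinter⟩ := isUFIM_iff_sum_inter_eq_zero.1 hg
  refine isUFIM_iff_sum_inter_eq_zero.2 ⟨hne, ?_, fun J K hJ hK => ?_⟩
  · rw [sum_fiberwise, h0]
  · rw [sum_fiberwise_eq_sum_filter] at hJ hK ⊢
    simpa only [mem_inter, filter_and] using hinter _ _ hJ hK

end Factorization

section Merging

variable {α β M : Type*} [Fintype α] [Fintype β]

lemma exists_equiv_of_map_univ_eq {f : α → M} {h : β → M}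
    (H : (univ : Finset α).val.map f = (univ : Finset β).val.map h) :
    ∃ e : α ≃ β, ∀ a, h (e a) = f a := by
  classical
  have hfiber (c : M) : Nonempty ({a // f a = c} ≃ {b // h b = c}) := by
    rw [← Fintype.card_eq, Fintype.card_subtype, Fintype.card_subtype]
    simpa only [Multiset.count_map, ← filter_val, card_val, eq_comm]
      using congrArg (Multiset.count c) H
  exact ⟨Equiv.ofFiberEquiv fun c => (hfiber c).some, Equiv.ofFiberEquiv_map _⟩

lemma exists_fiberwise_sum_eq [AddCommMonoid M] [DecidableEq α] [DecidableEq β] {g : α → M}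
    {s : Finset α} {g' : β → M}
    (h : (univ : Finset β).val.map g' = sᶜ.val.map g + {∑ i ∈ s, g i}) :
    ∃ f : α → β, (fun j => ∑ i with f i = j, g i) = g' := by
  let merged : Option ↥sᶜ → M := fun o => o.elim (∑ i ∈ s, g i) fun i => g i
  have hmerged : univ.val.map merged = univ.val.map g' := by
    rw [h, add_comm, Multiset.singleton_add]
    simp only [merged, univ_option, insertNone, OrderEmbedding.coe_ofMapLEIff, cons_val,
      Multiset.map_cons, Option.elim_none, map_val, Multiset.map_map]
    exact congrArg _ (Multiset.attach_map_val' sᶜ.val g)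
  obtain ⟨e, he⟩ := exists_equiv_of_map_univ_eq hmerged
  let collapse : α → Option ↥sᶜ := fun i => if hi : i ∈ sᶜ then some ⟨i, hi⟩ else none
  have hcollapse (o : Option ↥sᶜ) : ∑ i with collapse i = o, g i = merged o := by
    cases o with
    | none => simp [collapse, merged]
    | some k =>
      have hfiber : ({i | collapse i = some k} : Finset α) = {k.1} := by
        ext i
        simp only [collapse, mem_filter_univ, mem_singleton]
        grind
      rw [hfiber, sum_singleton]
      rfl
  refine ⟨e ∘ collapse, funext fun j => ?_⟩
  obtain ⟨o, rfl⟩ := e.surjective j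
  simp only [Function.comp_apply, e.apply_eq_iff_eq, hcollapse, he]

end Merging

/-- Proposition (lift): if `S` is a UFIM over `G∖{0}` and `S₀ ⊆ S` has `σ(S₀) ≠ 0`,
then `(S∖S₀) ⊔ {σ(S₀)}` is also a UFIM over `G∖{0}`. The new indexed multiset is any
family `g'` whose multiset of values is that of `g` off `I₀` together with `σ(S₀)`. -/
theorem ufim_lift {G : Type*} [AddCommGroup G] {ℓ : ℕ} (g : Fin ℓ → G) (hg : IsUFIM g)
    (I₀ : Finset (Fin ℓ)) (hI₀ : ∑ i ∈ I₀, g i ≠ 0)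
    {ℓ' : ℕ} (g' : Fin ℓ' → G)
    (hvals : Multiset.map g' Finset.univ.val =
      Multiset.map g (Finset.univ \ I₀).val + {∑ i ∈ I₀, g i}) :
    IsUFIM g' := by
  have hne (j : Fin ℓ') : g' j ≠ 0 := by
    have hj : g' j ∈ univ.val.map g' := Multiset.mem_map_of_mem g' (mem_univ_val j)
    rw [hvals, Multiset.mem_add, Multiset.mem_map, Multiset.mem_singleton] at hj
    rcases hj with ⟨i, -, hi⟩ | hj
    · exact hi ▸ hg.1 i
    · exact hj ▸ hI₀
  rw [← compl_eq_univ_sdiff] at hvals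
  obtain ⟨f, rfl⟩ := exists_fiberwise_sum_eq hvals
  exact hg.fiberwise_sum f hne
end

section
/- Let G = ⊕_{i=1}^n ⊕_{j=1}^{n_i} C_{p_i^{e_{ij}}} be a finite abelian group written as a direct sum of prime-power cyclic groups with p_1 < ⋯ < p_n, and suppose G is not an elementary abelian p_1-group (i.e., it is not the case that both n = 1 and all e_{1j} = 1). Let S be a UFIM over G∖{0}, let S_{p_1} be the union of all irreducible factors of S all of whose elements have order p_1 (equivalently, lie in the p_1-torsion subgroup of G, which is isomorphic to C_{p_1}^{n_1}), and let m_{p_1} be the number of irreducible factors of S contained in S_{p_1}. Then: (a) if n > 1 and max_{1≤j≤n_1} e_{1j} > 1, then k(S) ≤ k(G) + ((log_2 |G|) − m_{p_1})/min{p_1², p_2} + m_{p_1}/p_1; (b) if n > 1 and max_{1≤j≤n_1} e_{1j} = 1, then k(S) ≤ k(G) + ((log_2 |G|) − m_{p_1})/p_2 + m_{p_1}/p_1; (c) if n = 1 and max_{1≤j≤n_1} e_{1j} > 1, then k(S) ≤ k(G) + ((log_2 |G|) − m_{p_1})/p_1² + m_{p_1}/p_1. -/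
open Finset

/-!
Pick one element from each irreducible factor of a UFIM. By uniqueness of the factorization, a
zero-sum subfamily contains every factor it meets, so what remains after removing the chosen
elements is zero-sum free and has cross number at most `k(G)`. If two sets `A ⊈ B` of factors had
chosen elements of equal sum, then the chosen elements of `A \ B` together with the unchosen
elements of the factors in `B \ A` would form a zero-sum subfamily containing only part of a factor
it meets. Hence the number of factors is at most `log₂ |G|`. In a factor containing an element of
order other than `p₁`, choose such an element: its order has a prime divisor other than `p₁` or is
divisible by `p₁ ^ 2`, which bounds it below.
-/

section UniqueFactorization

variable {G : Type*} [AddCommGroup G] {ℓ : ℕ} {g : Fin ℓ → G} {I J K : Finset (Fin ℓ)}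

lemma isMinZeroSum_iff_minimal :
    IsMinZeroSum g I ↔ Minimal (fun J => J.Nonempty ∧ ∑ i ∈ J, g i = 0) I := by
  simp only [IsMinZeroSum, minimal_iff_forall_lt, not_and, ← and_assoc, ne_eq]

lemma IsMinZeroSum.nontrivial (hI : IsMinZeroSum g I) (hg : ∀ i, g i ≠ 0) : I.Nontrivial := by
  obtain ⟨i, rfl⟩ | hI' := hI.1.exists_eq_singleton_or_nontrivial
  · exact absurd (by simpa only [sum_singleton] using hI.2.1) (hg i)
  · exact hI'

lemma exists_isMinZeroSum_subset_s12 (hJ : J.Nonempty) (hJ0 : ∑ i ∈ J, g i = 0) :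
    ∃ K ⊆ J, IsMinZeroSum g K := by
  simp only [isMinZeroSum_iff_minimal]
  exact exists_minimal_le_of_wellFoundedLT _ J ⟨hJ, hJ0⟩

lemma IsMinZeroSum.exists_finpartition_mem (hK : IsMinZeroSum g K) (hKJ : K ⊆ J)
    (Q : Finpartition (J \ K)) (hQ : ∀ I ∈ Q.parts, IsMinZeroSum g I) :
    ∃ R : Finpartition J, K ∈ R.parts ∧ ∀ I ∈ R.parts, IsMinZeroSum g I :=
  ⟨Q.extend hK.1.ne_empty sdiff_disjoint (sdiff_union_of_subset hKJ), mem_insert_self _ _,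
    forall_mem_insert _ _ _ |>.2 ⟨hK, hQ⟩⟩

lemma exists_finpartition_isMinZeroSum_s12 (hJ0 : ∑ i ∈ J, g i = 0) :
    ∃ Q : Finpartition J, ∀ I ∈ Q.parts, IsMinZeroSum g I := by
  induction J using Finset.strongInduction with
  | H J ih =>
    rcases J.eq_empty_or_nonempty with rfl | hJ
    · exact ⟨Finpartition.empty _, fun I hI => absurd hI (notMem_empty I)⟩
    · obtain ⟨K, hKJ, hK⟩ := exists_isMinZeroSum_subset_s12 hJ hJ0
      have hdiff : ∑ i ∈ J \ K, g i = 0 := by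
        rw [sum_sdiff_eq_sub hKJ, hJ0, hK.2.1, sub_zero]
      obtain ⟨Q, hQ⟩ := ih (J \ K) (sdiff_ssubset hKJ hK.1) hdiff
      obtain ⟨R, -, hR⟩ := hK.exists_finpartition_mem hKJ Q hQ
      exact ⟨R, hR⟩

variable {P : Finpartition (univ : Finset (Fin ℓ))}

lemma IsFactorization.sum_eq_zero (hP : IsFactorization g P) : ∑ i, g i = 0 := by
  rw [← P.biUnion_parts, sum_biUnion P.disjoint]
  exact Finset.sum_eq_zero fun I hI => (hP I hI).2.1

lemma IsUFIM.mem_parts (hg : IsUFIM g) (hP : IsFactorization g P) (hK : IsMinZeroSum g K) :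
    K ∈ P.parts := by
  have hcompl : ∑ i ∈ univ \ K, g i = 0 := by
    rw [sum_sdiff_eq_sub (subset_univ K), hP.sum_eq_zero, hK.2.1, sub_zero]
  obtain ⟨Q, hQ⟩ := exists_finpartition_isMinZeroSum_s12 hcompl
  obtain ⟨R, hKR, hR⟩ := hK.exists_finpartition_mem (subset_univ K) Q hQ
  rwa [hg.2.unique hP hR]

lemma IsUFIM.subset_of_sum_eq_zero (hg : IsUFIM g) (hP : IsFactorization g P)
    (hJ0 : ∑ i ∈ J, g i = 0) (hI : I ∈ P.parts) {i : Fin ℓ} (hiI : i ∈ I) (hiJ : i ∈ J) :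
    I ⊆ J := by
  obtain ⟨Q, hQ⟩ := exists_finpartition_isMinZeroSum_s12 hJ0
  obtain ⟨K, hKQ, hiK⟩ := Q.exists_mem hiJ
  obtain rfl := P.eq_of_mem_parts (hg.mem_parts hP (hQ K hKQ)) hI hiK hiI
  exact Q.le hKQ

lemma IsUFIM.sum_ne_zero_of_disjoint (hg : IsUFIM g) (hP : IsFactorization g P)
    {R : Finset (Fin ℓ)} (hR : ∀ I ∈ P.parts, ¬ Disjoint I R) (hJ : J.Nonempty)
    (hJR : Disjoint J R) : ∑ i ∈ J, g i ≠ 0 := by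
  intro hJ0
  obtain ⟨i, hiJ⟩ := hJ
  obtain ⟨I, hI, hiI⟩ := P.exists_mem (mem_univ i)
  exact hR I hI (hJR.mono_left (hg.subset_of_sum_eq_zero hP hJ0 hI hiI hiJ))

end UniqueFactorization

section Representatives

lemma eq_of_apply_mem_parts {α : Type*} [DecidableEq α] {s : Finset α} {P : Finpartition s}
    {x : P.parts → α} (hx : ∀ I, x I ∈ I.1) {I J : P.parts} (h : x I ∈ J.1) : I = J :=
  Subtype.ext (P.eq_of_mem_parts I.2 J.2 (hx I) h)

lemma injective_of_forall_mem_parts {α : Type*} [DecidableEq α] {s : Finset α}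
    {P : Finpartition s} {x : P.parts → α} (hx : ∀ I, x I ∈ I.1) : Function.Injective x :=
  fun _ J hIJ => eq_of_apply_mem_parts hx (hIJ ▸ hx J)

variable {G : Type*} [AddCommGroup G] {ℓ : ℕ} {g : Fin ℓ → G}
  {P : Finpartition (univ : Finset (Fin ℓ))} {x : P.parts → Fin ℓ}

lemma IsFactorization.sum_biUnion_erase (hP : IsFactorization g P) (hx : ∀ I, x I ∈ I.1)
    (B : Finset P.parts) :
    ∑ i ∈ B.biUnion (fun I => I.1.erase (x I)), g i = -∑ I ∈ B, g (x I) := by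
  have hdisj : (B : Set P.parts).PairwiseDisjoint fun I => I.1.erase (x I) :=
    fun I _ J _ hIJ => (P.disjoint I.2 J.2 (Subtype.coe_ne_coe.2 hIJ)).mono
      (erase_subset _ _) (erase_subset _ _)
  rw [sum_biUnion hdisj, ← sum_neg_distrib]
  refine sum_congr rfl fun I _ => ?_
  rw [sum_erase_eq_sub (hx I), (hP I I.2).2.1, zero_sub]

lemma IsUFIM.eq_empty_of_sum_eq (hg : IsUFIM g) (hP : IsFactorization g P)
    (hx : ∀ I, x I ∈ I.1) {A B : Finset P.parts} (hAB : Disjoint A B)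
    (hsum : ∑ I ∈ A, g (x I) = ∑ I ∈ B, g (x I)) : A = ∅ := by
  have hdisj : Disjoint (A.image x) (B.biUnion fun I => I.1.erase (x I)) := by
    simp only [Finset.disjoint_left, mem_image, mem_biUnion, mem_erase]
    rintro _ ⟨I, hIA, rfl⟩ ⟨J, hJB, -, hIJ⟩
    obtain rfl := eq_of_apply_mem_parts hx hIJ
    exact Finset.disjoint_left.1 hAB hIA hJB
  have hzero : ∑ i ∈ A.image x ∪ B.biUnion (fun I => I.1.erase (x I)), g i = 0 := by
    rw [sum_union hdisj, sum_image (injective_of_forall_mem_parts hx).injOn,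
      hP.sum_biUnion_erase hx, hsum, add_neg_cancel]
  refine eq_empty_of_forall_notMem fun I hIA => ?_
  obtain ⟨y, hyI, hyx⟩ := ((hP I I.2).nontrivial hg.1).exists_ne (x I)
  have hy := hg.subset_of_sum_eq_zero hP hzero I.2 (hx I)
    (mem_union_left _ (mem_image_of_mem x hIA)) hyI
  simp only [mem_union, mem_image, mem_biUnion, mem_erase] at hy
  obtain ⟨J, -, rfl⟩ | ⟨J, hJB, -, hyJ⟩ := hy
  · exact hyx (congrArg x (eq_of_apply_mem_parts hx hyI))
  · obtain rfl : I = J := Subtype.ext (P.eq_of_mem_parts I.2 J.2 hyI hyJ)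
    exact Finset.disjoint_left.1 hAB hIA hJB

lemma IsUFIM.injective_sum (hg : IsUFIM g) (hP : IsFactorization g P) (hx : ∀ I, x I ∈ I.1) :
    Function.Injective fun A : Finset P.parts => ∑ I ∈ A, g (x I) := by
  have subset_of_sum_eq {A B : Finset P.parts}
      (h : ∑ I ∈ A, g (x I) = ∑ I ∈ B, g (x I)) : A ⊆ B := by
    refine sdiff_eq_empty_iff_subset.1 (hg.eq_empty_of_sum_eq hP hx (B := B \ A) ?_ ?_)
    · exact disjoint_sdiff_sdiff
    · rw [← sub_eq_zero, sum_sdiff_sub_sum_sdiff, h, sub_self]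
  exact fun A B h => (subset_of_sum_eq h).antisymm (subset_of_sum_eq h.symm)

lemma IsUFIM.two_pow_card_parts_le_natCard [Finite G] (hg : IsUFIM g) (hP : IsFactorization g P) :
    2 ^ #P.parts ≤ Nat.card G := by
  choose x hx using fun I : P.parts => (hP I I.2).1
  simpa using Nat.card_le_card_of_injective _ (hg.injective_sum hP hx)

lemma IsUFIM.card_parts_le_logb [Finite G] (hg : IsUFIM g) (hP : IsFactorization g P) :
    (#P.parts : ℝ) ≤ Real.logb 2 (Nat.card G) := by
  rw [Real.le_logb_iff_rpow_le one_lt_two (mod_cast Nat.card_pos), Real.rpow_natCast]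
  exact mod_cast hg.two_pow_card_parts_le_natCard hP

lemma IsFactorization.exists_mem_one_div_addOrderOf_le (hP : IsFactorization g P)
    (hg : ∀ i, g i ≠ 0) {q : ℕ} {D : ℝ} (hD : 0 < D)
    (hord : ∀ y : G, y ≠ 0 → addOrderOf y ≠ q → D ≤ addOrderOf y) (I : P.parts) :
    ∃ a ∈ I.1, (1 : ℝ) / addOrderOf (g a) ≤
      if ∀ i ∈ I.1, addOrderOf (g i) = q then 1 / (q : ℝ) else 1 / D := by
  split_ifs with hI
  · obtain ⟨a, ha⟩ := (hP I I.2).1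
    exact ⟨a, ha, by rw [hI a ha]⟩
  · push Not at hI
    obtain ⟨a, ha, haq⟩ := hI
    exact ⟨a, ha, one_div_le_one_div_of_le hD (hord _ (hg a) haq)⟩

end Representatives

section LittleCross

variable {G : Type*} [AddCommGroup G] [Finite G] {ℓ : ℕ} {g : Fin ℓ → G}

lemma IsZeroSumFree.length_le_natCard (hg : IsZeroSumFree g) : ℓ ≤ Nat.card G := by
  have hinj : Function.Injective fun a : Fin ℓ => ∑ i ∈ Iic a, g i := by
    refine .of_lt_imp_ne fun a b hab heq => ?_
    refine hg (Iic b \ Iic a) ⟨b, by simpa using hab⟩ ?_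
    rw [sum_sdiff_eq_sub (Iic_subset_Iic.2 hab.le), sub_eq_zero]
    exact heq.symm
  simpa using Nat.card_le_card_of_injective _ hinj

lemma crossNum_le_length (g : Fin ℓ → G) : crossNum g ≤ ℓ := by
  have hle : ∀ i, (1 : ℝ) / addOrderOf (g i) ≤ 1 := fun i =>
    div_le_one_of_le₀ (mod_cast addOrderOf_pos (g i)) (Nat.cast_nonneg _)
  simpa [crossNum] using sum_le_card_nsmul univ _ 1 fun i _ => hle i

lemma bddAbove_crossNum_isZeroSumFree :
    BddAbove {x : ℝ | ∃ (ℓ : ℕ) (g : Fin ℓ → G), (∀ i, g i ≠ 0) ∧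
      IsZeroSumFree g ∧ crossNum g = x} := by
  refine ⟨Nat.card G, ?_⟩
  rintro _ ⟨ℓ, g, -, hg, rfl⟩
  exact (crossNum_le_length g).trans (mod_cast hg.length_le_natCard)

lemma IsZeroSumFree.crossNum_le_littleCross (hg : IsZeroSumFree g) :
    crossNum g ≤ littleCross G :=
  le_csSup bddAbove_crossNum_isZeroSumFree
    ⟨ℓ, g, fun i => by simpa using hg {i} (singleton_nonempty i), hg, rfl⟩

lemma sum_one_div_addOrderOf_le_littleCross {ι : Type*} {f : ι → G} {T : Finset ι}
    (hT : ∀ J ⊆ T, J.Nonempty → ∑ i ∈ J, f i ≠ 0) :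
    ∑ i ∈ T, (1 : ℝ) / addOrderOf (f i) ≤ littleCross G := by
  let φ : Fin #T ↪ ι := T.equivFin.symm.toEmbedding.trans (Function.Embedding.subtype _)
  have hφ : univ.map φ = T := by
    simp only [φ, ← map_map, univ_map_equiv_to_embedding, univ_eq_attach, attach_map_val]
  have hfree : IsZeroSumFree (f ∘ φ) := fun J hJ => by
    simpa only [sum_map, Function.comp_apply] using
      hT (J.map φ) ((map_subset_map.2 (subset_univ J)).trans_eq hφ) hJ.map
  calc ∑ i ∈ T, (1 : ℝ) / addOrderOf (f i) = crossNum (f ∘ φ) := by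
        conv_lhs => rw [← hφ, sum_map]
        rfl
    _ ≤ littleCross G := hfree.crossNum_le_littleCross

variable {P : Finpartition (univ : Finset (Fin ℓ))}

lemma IsUFIM.crossNum_le_littleCross_add_sum (hg : IsUFIM g) (hP : IsFactorization g P)
    {x : P.parts → Fin ℓ} (hx : ∀ I, x I ∈ I.1) :
    crossNum g ≤ littleCross G + ∑ I, (1 : ℝ) / addOrderOf (g (x I)) := by
  have hR : ∀ I ∈ P.parts, ¬ Disjoint I (univ.image x) := fun I hI =>
    not_disjoint_iff.2 ⟨x ⟨I, hI⟩, hx ⟨I, hI⟩, mem_image_of_mem x (mem_univ _)⟩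
  rw [crossNum, ← sum_sdiff (subset_univ (univ.image x)),
    sum_image (injective_of_forall_mem_parts hx).injOn]
  gcongr
  exact sum_one_div_addOrderOf_le_littleCross fun J hJ hne =>
    hg.sum_ne_zero_of_disjoint hP hR hne (subset_sdiff.1 hJ).2

theorem crossNum_le_lowestorder_general (hg : IsUFIM g) (hP : IsFactorization g P) {q : ℕ}
    {D : ℝ} (hD : 0 < D) (hord : ∀ y : G, y ≠ 0 → addOrderOf y ≠ q → D ≤ addOrderOf y) :
    crossNum g ≤ littleCross G +
      (Real.logb 2 (Nat.card G) - #{I ∈ P.parts | ∀ i ∈ I, addOrderOf (g i) = q}) / D +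
      #{I ∈ P.parts | ∀ i ∈ I, addOrderOf (g i) = q} / (q : ℝ) := by
  set m := #{I ∈ P.parts | ∀ i ∈ I, addOrderOf (g i) = q}
  choose x hx hxle using hP.exists_mem_one_div_addOrderOf_le hg.1 hD hord
  have hcard : m + #{I ∈ P.parts | ¬ ∀ i ∈ I, addOrderOf (g i) = q} = #P.parts :=
    card_filter_add_card_filter_not _
  calc crossNum g ≤ littleCross G + ∑ I, (1 : ℝ) / addOrderOf (g (x I)) :=
        hg.crossNum_le_littleCross_add_sum hP hx
    _ ≤ littleCross G + ∑ I : P.parts,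
          if ∀ i ∈ I.1, addOrderOf (g i) = q then 1 / (q : ℝ) else 1 / D := by
        gcongr with I
        exact hxle I
    _ = littleCross G + (#P.parts - m) / D + m / (q : ℝ) := by
        rw [sum_coe_sort P.parts fun I =>
          if ∀ i ∈ I, addOrderOf (g i) = q then 1 / (q : ℝ) else 1 / D, sum_ite, sum_const,
          sum_const, ← hcard]
        simp only [nsmul_eq_mul, Nat.cast_add, m]
        ring
    _ ≤ littleCross G + (Real.logb 2 (Nat.card G) - m) / D + m / (q : ℝ) := by
        gcongr
        exact hg.card_parts_le_logb hP

end LittleCross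

section ElementOrders

lemma exists_prime_dvd_ne_or_sq_dvd {q r : ℕ} (hr0 : r ≠ 0) (hr1 : r ≠ 1) (hrq : r ≠ q) :
    (∃ t, t.Prime ∧ t ∣ r ∧ t ≠ q) ∨ q ^ 2 ∣ r := by
  refine or_iff_not_imp_left.2 fun h => ?_
  push Not at h
  obtain ⟨k, rfl⟩ : ∃ k, r = q ^ k := ⟨_, Nat.eq_prime_pow_of_unique_prime_dvd hr0 (h _)⟩
  have hk0 : k ≠ 0 := by rintro rfl; exact hr1 (pow_zero q)
  have hk1 : k ≠ 1 := by rintro rfl; exact hrq (pow_one q)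
  exact pow_dvd_pow q (by lia)

variable {ι : Type*} {κ : ι → Type*} {p : ι → ℕ} {e : (i : ι) → κ i → ℕ}

lemma natCard_pi_zmod_pow [Fintype ι] [∀ i, Fintype (κ i)] :
    Nat.card ((i : ι) → (j : κ i) → ZMod (p i ^ e i j)) = ∏ i, ∏ j, p i ^ e i j := by
  simp only [Nat.card_pi, Nat.card_zmod]

variable {y : (i : ι) → (j : κ i) → ZMod (p i ^ e i j)} {i : ι} {s : ℕ}

lemma addOrderOf_dvd_pow_mul_prod [Fintype ι] [∀ i, Fintype (κ i)] [DecidableEq ι] {c : ℕ}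
    (hc : ∀ j, e i j ≤ c) :
    addOrderOf y ∣ p i ^ c * ∏ k ∈ univ.erase i, ∏ j, p k ^ e k j := by
  rw [addOrderOf_dvd_iff_nsmul_eq_zero]
  funext k j
  have hdvd : p k ^ e k j ∣ p i ^ c * ∏ k ∈ univ.erase i, ∏ j, p k ^ e k j := by
    rcases eq_or_ne k i with rfl | hk
    · exact (pow_dvd_pow _ (hc j)).mul_right _
    · refine Dvd.dvd.mul_left ((dvd_prod_of_mem (fun j => p k ^ e k j) (mem_univ j)).trans ?_) _
      exact dvd_prod_of_mem (fun k => ∏ j, p k ^ e k j) (mem_erase.2 ⟨hk, mem_univ k⟩)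
  rw [Pi.smul_apply, Pi.smul_apply, nsmul_eq_mul, (ZMod.natCast_eq_zero_iff _ _).2 hdvd, zero_mul]
  rfl

variable [∀ i, Finite (κ i)] [∀ i, Fact (p i).Prime]

lemma exists_eq_of_prime_dvd_addOrderOf [Finite ι] {t : ℕ} (ht : t.Prime)
    (hty : t ∣ addOrderOf y) : ∃ i, t = p i := by
  have := Fintype.ofFinite ι
  have := fun i => Fintype.ofFinite (κ i)
  have hcard := hty.trans (addOrderOf_dvd_natCard y)
  rw [natCard_pi_zmod_pow] at hcard
  obtain ⟨i, -, hi⟩ := ht.prime.exists_mem_finset_dvd hcard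
  obtain ⟨j, -, hj⟩ := ht.prime.exists_mem_finset_dvd hi
  exact ⟨i, Nat.prime_eq_prime_of_dvd_pow ht Fact.out hj⟩

lemma not_pow_succ_dvd_addOrderOf [Finite ι] (hinj : Function.Injective p) {c : ℕ}
    (hc : ∀ j, e i j ≤ c) : ¬ p i ^ (c + 1) ∣ addOrderOf y := by
  classical
  have := Fintype.ofFinite ι
  have := fun i => Fintype.ofFinite (κ i)
  have hpi : (p i).Prime := Fact.out
  intro hdvd
  have hmul := hdvd.trans (addOrderOf_dvd_pow_mul_prod hc)
  rw [pow_succ, Nat.mul_dvd_mul_iff_left (pow_pos hpi.pos c)] at hmul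
  obtain ⟨k, hk, hik⟩ := hpi.prime.exists_mem_finset_dvd hmul
  obtain ⟨j, -, hij⟩ := hpi.prime.exists_mem_finset_dvd hik
  have heq : p i = p k := Nat.prime_eq_prime_of_dvd_pow hpi Fact.out hij
  exact ne_of_mem_erase hk (hinj heq).symm

lemma exists_ne_dvd_or_sq_dvd_addOrderOf [Finite ι] (hy : y ≠ 0) (hyi : addOrderOf y ≠ p i) :
    (∃ k ≠ i, p k ∣ addOrderOf y) ∨ p i ^ 2 ∣ addOrderOf y := by
  refine (exists_prime_dvd_ne_or_sq_dvd (addOrderOf_pos y).ne'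
    (AddMonoid.addOrderOf_eq_one_iff.not.2 hy) hyi).imp_left ?_
  rintro ⟨t, ht, hty, hti⟩
  obtain ⟨k, rfl⟩ := exists_eq_of_prime_dvd_addOrderOf ht hty
  exact ⟨k, fun hki => hti (congrArg p hki), hty⟩

lemma min_sq_le_addOrderOf [Finite ι] (hs : ∀ k ≠ i, s ≤ p k) (hy : y ≠ 0)
    (hyi : addOrderOf y ≠ p i) : min (p i ^ 2) s ≤ addOrderOf y := by
  rcases exists_ne_dvd_or_sq_dvd_addOrderOf hy hyi with ⟨k, hk, hdvd⟩ | hdvd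
  · exact min_le_of_right_le ((hs k hk).trans (Nat.le_of_dvd (addOrderOf_pos y) hdvd))
  · exact min_le_of_left_le (Nat.le_of_dvd (addOrderOf_pos y) hdvd)

lemma le_addOrderOf_of_exponent_le_one [Finite ι] (hinj : Function.Injective p)
    (he : ∀ j, e i j ≤ 1) (hs : ∀ k ≠ i, s ≤ p k) (hy : y ≠ 0) (hyi : addOrderOf y ≠ p i) :
    s ≤ addOrderOf y := by
  obtain ⟨k, hk, hdvd⟩ := (exists_ne_dvd_or_sq_dvd_addOrderOf hy hyi).resolve_right
    (not_pow_succ_dvd_addOrderOf hinj he)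
  exact (hs k hk).trans (Nat.le_of_dvd (addOrderOf_pos y) hdvd)

lemma sq_le_addOrderOf [Subsingleton ι] (hy : y ≠ 0) (hyi : addOrderOf y ≠ p i) :
    p i ^ 2 ≤ addOrderOf y := by
  obtain ⟨k, hk, -⟩ | hdvd := exists_ne_dvd_or_sq_dvd_addOrderOf hy hyi
  · exact absurd (Subsingleton.elim k i) hk
  · exact Nat.le_of_dvd (addOrderOf_pos y) hdvd

end ElementOrders

/-- Lemma (lowestorder): let `G = ⊕_{i=1}^n ⊕_{j=1}^{n_i} C_{p_i^{e_{ij}}}` with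
`p_1 < ⋯ < p_n` primes, and suppose `G` is not an elementary abelian `p_1`-group.
For a UFIM `S` over `G∖{0}` with irreducible factorization `P`, let `m_{p_1}` be the number
of irreducible factors all of whose elements have order `p_1`. Then:
(a) if `n > 1` and some `e_{1j} > 1`, `k(S) ≤ k(G) + (log₂|G| − m_{p_1})/min(p_1², p_2) + m_{p_1}/p_1`;
(b) if `n > 1` and all `e_{1j} = 1`, `k(S) ≤ k(G) + (log₂|G| − m_{p_1})/p_2 + m_{p_1}/p_1`;
(c) if `n = 1` and some `e_{1j} > 1`, `k(S) ≤ k(G) + (log₂|G| − m_{p_1})/p_1² + m_{p_1}/p_1`. -/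
theorem crossNum_le_lowestorder (n : ℕ) (hn : 0 < n)
    (p : Fin n → ℕ) (hp : ∀ i, (p i).Prime) (hmono : StrictMono p)
    (nn : Fin n → ℕ) (hnn : ∀ i, 0 < nn i)
    (e : (i : Fin n) → Fin (nn i) → ℕ) (he : ∀ i j, 0 < e i j)
    (hG : ¬ (n = 1 ∧ ∀ i j, e i j = 1))
    {ℓ : ℕ} (g : Fin ℓ → ((i : Fin n) → (j : Fin (nn i)) → ZMod (p i ^ e i j)))
    (hg : IsUFIM g)
    (P : Finpartition (Finset.univ : Finset (Fin ℓ))) (hP : IsFactorization g P) :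
    let G := (i : Fin n) → (j : Fin (nn i)) → ZMod (p i ^ e i j)
    let p1 : ℝ := (p ⟨0, hn⟩ : ℝ)
    let mP : ℕ :=
      (P.parts.filter (fun I => ∀ i ∈ I, addOrderOf (g i) = p ⟨0, hn⟩)).card
    let logG : ℝ := Real.logb 2 (∏ i, ∏ j, (p i : ℝ) ^ e i j)
    ((∀ (h2 : 1 < n), (∃ j, 1 < e ⟨0, hn⟩ j) →
        crossNum g ≤ littleCross G +
          (logG - mP) / min (p1 ^ 2) ((p ⟨1, h2⟩ : ℝ)) + (mP : ℝ) / p1) ∧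
     (∀ (h2 : 1 < n), (∀ j, e ⟨0, hn⟩ j = 1) →
        crossNum g ≤ littleCross G +
          (logG - mP) / (p ⟨1, h2⟩ : ℝ) + (mP : ℝ) / p1) ∧
     (n = 1 → (∃ j, 1 < e ⟨0, hn⟩ j) →
        crossNum g ≤ littleCross G +
          (logG - mP) / (p1 ^ 2) + (mP : ℝ) / p1)) := by
  have hfact : ∀ i, Fact (p i).Prime := fun i => ⟨hp i⟩
  have hpos : ∀ i, (0 : ℝ) < p i := fun i => mod_cast (hp i).pos
  have hp2 (h2 : 1 < n) (i : Fin n) (hi : i ≠ ⟨0, hn⟩) : p ⟨1, h2⟩ ≤ p i :=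
    hmono.monotone (Nat.one_le_iff_ne_zero.2 fun h => hi (Fin.ext h))
  have hcard : ∏ i, ∏ j, (p i : ℝ) ^ e i j =
      Nat.card ((i : Fin n) → (j : Fin (nn i)) → ZMod (p i ^ e i j)) := by
    simp only [natCard_pi_zmod_pow, Nat.cast_prod, Nat.cast_pow]
  simp only [hcard]
  refine ⟨fun h2 _ => ?_, fun h2 he1 => ?_, fun h1 _ => ?_⟩
  · exact crossNum_le_lowestorder_general hg hP (lt_min (pow_pos (hpos _) 2) (hpos _))
      fun y hy hy1 => mod_cast min_sq_le_addOrderOf (hp2 h2) hy hy1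
  · exact crossNum_le_lowestorder_general hg hP (hpos _) fun y hy hy1 =>
      mod_cast le_addOrderOf_of_exponent_le_one hmono.injective (fun j => (he1 j).le)
        (hp2 h2) hy hy1
  · subst h1
    exact crossNum_le_lowestorder_general hg hP (pow_pos (hpos _) 2) fun y hy hy1 =>
      mod_cast sq_le_addOrderOf hy hy1
end
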